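/- arXiv:1605.04239 — 2 statements merged into one kernel-verified Lean document; each statement's English description precedes it below -/
import Mathlib

section
/- Let ρ, Θ, θ, θ′ > 0 and n_0 ≥ 1 be constants. Then there exists a constant C > 0, depending only on ρ, Θ, θ, θ′ and n_0, with the following property. Let (λ_j)_{j≥1} be a sequence of nonnegative reals that is weakly logarithmic with these constants, i.e. (i) ρ^j · j · λ_j ≤ Θ for all j ≥ 1; (ii) ∑_{j≤n} ρ^j · j · λ_j ≥ θ·n for all n ≥ n_0; (iii) n·Q(n)·ρ^n ≥ θ′·exp{∑_{j≤n} λ_j ρ^j} for all n ≥ 1, where Q(n) := ∑_{ℓ(s̄)=n} ∏_{j≤n} λ_j^{s_j}/s_j!. Let n ≥ 1, let {h_j(k) : j,k ≥ 1, jk ≤ n} be an arbitrary real array extended by h_j(0) = 0, and define the additive function h(s̄) := ∑_{j=1}^n h_j(s_j) on the set Ω_n := { s̄ ∈ ℕ_0^n : ℓ(s̄) = n }, endowed with the probability measure P_n(s̄) := (1/Q(n)) ∏_{j≤n} λ_j^{s_j}/s_j!. Then the variance of h under P_n satisfies V_n h := E_n h² − (E_n h)² ≤ C · ∑_{j,k≥1,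 jk≤n} (λ_j^k h_j(k)² / k!) · Q^{{j}}(n − jk) / Q(n), where Q^{{j}}(m) := ∑_{ℓ(s̄)=m, s_j=0} ∏_{i≤m} λ_i^{s_i}/s_i! (and Q^{{j}}(0) := 1). -/
open Nat Finset

/-- The set of component-size vectors `s̄ ∈ ℕ₀ⁿ` with `ℓ(s̄) := 1·s_1 + ⋯ + n·s_n = n`. -/
def OmegaSet (n : ℕ) : Finset (Fin n → ℕ) :=
  (Fintype.piFinset fun _ : Fin n => Finset.range (n + 1)).filter
    (fun s : Fin n → ℕ => ∑ j : Fin n, ((j : ℕ) + 1) * s j = n)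

/-- The weight `∏_{j≤n} λ_j^{s_j}/s_j!` of a component-size vector. -/
noncomputable def wt (lam : ℕ → ℝ) (n : ℕ) (s : Fin n → ℕ) : ℝ :=
  ∏ j : Fin n, lam ((j : ℕ) + 1) ^ (s j) / ((s j)! : ℝ)

/-- `Q(n) := ∑_{ℓ(s̄)=n} ∏_{j≤n} λ_j^{s_j}/s_j!` (with `Q(0) = 1`). -/
noncomputable def Qfun (lam : ℕ → ℝ) (n : ℕ) : ℝ :=
  ∑ s ∈ OmegaSet n, wt lam n s

/-- `Q^{{j}}(m) := ∑_{ℓ(s̄)=m, s_j=0} ∏_{i≤m} λ_i^{s_i}/s_i!` (with `Q^{{j}}(0) = 1`). -/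
noncomputable def Qj (lam : ℕ → ℝ) (j m : ℕ) : ℝ :=
  ∑ s ∈ (OmegaSet m).filter (fun s : Fin m → ℕ => ∀ i : Fin m, (i : ℕ) + 1 = j → s i = 0),
    wt lam m s

/-- Expectation with respect to the measure `P_n(s̄) = (1/Q(n)) ∏_{j≤n} λ_j^{s_j}/s_j!`
on `Ω_n = { s̄ : ℓ(s̄) = n }`. -/
noncomputable def expectn (lam : ℕ → ℝ) (n : ℕ) (f : (Fin n → ℕ) → ℝ) : ℝ :=
  (∑ s ∈ OmegaSet n, wt lam n s * f s) / Qfun lam n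

/-- Variance with respect to `P_n`. -/
noncomputable def variancen (lam : ℕ → ℝ) (n : ℕ) (f : (Fin n → ℕ) → ℝ) : ℝ :=
  expectn lam n (fun s => (f s) ^ 2) - (expectn lam n f) ^ 2

/-!
Replacing `λ_j` by `λ_j ρ^j` changes neither `P_n` nor the right-hand side, so let `ρ = 1`. The
right-hand side is then `C · E_n ∑_j h_j(s_j)²`, and it suffices to bound `E_n (h - a)²` by it for
some real `a`. On `ℓ(s̄) = n` only boundedly many terms `h_j(s_j)` have `j` below a fixed cutoff or
`3 j s_j > n`, and Cauchy–Schwarz disposes of them. For the other terms, write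
`n (h - a)² = ∑_i i s_i (h - a)²`: removing one component of size `i` turns the factor `i s_i` of
the weight into `i λ_i ≤ Θ`, and the resulting vectors, whose total sizes `n - i` are distinct,
contribute at most a sum over independent Poisson-like components. There the variance is additive,
so with `a` the independent mean one is left with second moments of single terms, which condition
(iii) compares with those under `P_n`, because `Q(n)` is at most a constant times
`Q^{{j}}(n - j k)` when `3 j k ≤ n` and `j` exceeds the cutoff.
-/

namespace Assembly

/-! ### Sums of independent variables -/

section Independent

variable {ι κ : Type*}

lemma exists_sum_mul_sub_eq_zero (t : Finset κ) {p : κ → ℝ} (hp : ∀ k ∈ t, 0 ≤ p k) (g : κ → ℝ) :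
    ∃ c, ∑ k ∈ t, p k * (g k - c) = 0 := by
  by_cases htotal : ∑ k ∈ t, p k = 0
  · have hp_zero := (sum_eq_zero_iff_of_nonneg hp).1 htotal
    exact ⟨0, sum_eq_zero fun k hk => by rw [hp_zero k hk, zero_mul]⟩
  · refine ⟨(∑ k ∈ t, p k * g k) / ∑ k ∈ t, p k, ?_⟩
    simp only [mul_sub, sum_sub_distrib, ← sum_mul]
    rw [mul_div_cancel₀ _ htotal, sub_self]

lemma sum_mul_sq_sub_le {t : Finset κ} {p g : κ → ℝ} {c : ℝ} (hp : ∀ k ∈ t, 0 ≤ p k)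
    (hc : ∑ k ∈ t, p k * (g k - c) = 0) :
    ∑ k ∈ t, p k * (g k - c) ^ 2 ≤ ∑ k ∈ t, p k * g k ^ 2 := by
  have hexpand : ∑ k ∈ t, p k * g k ^ 2 = ∑ k ∈ t, p k * (g k - c) ^ 2 +
      2 * c * ∑ k ∈ t, p k * (g k - c) + c ^ 2 * ∑ k ∈ t, p k := by
    simp only [mul_sum, ← sum_add_distrib]
    exact sum_congr rfl fun k _ => by ring
  rw [hexpand, hc, mul_zero, add_zero]
  exact le_add_of_nonneg_right (mul_nonneg (sq_nonneg c) (sum_nonneg hp))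

variable [Fintype ι] [DecidableEq ι] {S : ι → Finset κ} {p : ι → κ → ℝ}

lemma sum_piFinset_prod_mul_apply (S : ι → Finset κ) (p : ι → κ → ℝ) (i : ι) (v : κ → ℝ) :
    ∑ s ∈ Fintype.piFinset S, (∏ l, p l (s l)) * v (s i) =
      (∑ k ∈ S i, p i k * v k) * ∏ l ∈ univ.erase i, ∑ k ∈ S l, p l k := by
  have hfactor := prod_univ_sum S fun l k => p l k * if l = i then v k else 1
  simp only [prod_mul_distrib, prod_ite_eq', mem_univ, if_true] at hfactor
  rw [← hfactor, ← mul_prod_erase _ _ (mem_univ i)]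
  congr 1
  · simp
  · refine prod_congr rfl fun l hl => ?_
    simp [ne_of_mem_erase hl]

lemma sum_piFinset_prod_mul_apply_mul_apply_eq_zero {i j : ι} (hij : i ≠ j) {v : κ → ℝ}
    (w : κ → ℝ) (hv : ∑ k ∈ S i, p i k * v k = 0) :
    ∑ s ∈ Fintype.piFinset S, (∏ l, p l (s l)) * (v (s i) * w (s j)) = 0 := by
  have hfactor := prod_univ_sum S fun l k =>
    p l k * ((if l = i then v k else 1) * if l = j then w k else 1)
  simp only [prod_mul_distrib, prod_ite_eq', mem_univ, if_true] at hfactor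
  rw [← hfactor]
  exact prod_eq_zero (mem_univ i) (by simpa [hij] using hv)

lemma sum_piFinset_prod_mul_sq_sum {u : ι → κ → ℝ} (hu : ∀ i, ∑ k ∈ S i, p i k * u i k = 0) :
    ∑ s ∈ Fintype.piFinset S, (∏ l, p l (s l)) * (∑ i, u i (s i)) ^ 2 =
      ∑ i, ∑ s ∈ Fintype.piFinset S, (∏ l, p l (s l)) * u i (s i) ^ 2 := by
  simp only [sq, sum_mul_sum]
  simp only [mul_sum]
  rw [sum_comm]
  refine sum_congr rfl fun i _ => ?_
  rw [sum_comm]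
  exact sum_eq_single i
    (fun j _ hji => sum_piFinset_prod_mul_apply_mul_apply_eq_zero hji.symm (u j) (hu i)) (by simp)

lemma exists_sum_piFinset_prod_mul_sq_sub_le (hp : ∀ i, ∀ k ∈ S i, 0 ≤ p i k)
    (g : ι → κ → ℝ) :
    ∃ a, ∑ s ∈ Fintype.piFinset S, (∏ l, p l (s l)) * (∑ i, g i (s i) - a) ^ 2 ≤
      ∑ i, ∑ s ∈ Fintype.piFinset S, (∏ l, p l (s l)) * g i (s i) ^ 2 := by
  choose c hc using fun i => exists_sum_mul_sub_eq_zero (S i) (hp i) (g i)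
  refine ⟨∑ i, c i, ?_⟩
  simp only [← sum_sub_distrib]
  rw [sum_piFinset_prod_mul_sq_sum hc]
  refine sum_le_sum fun i _ => ?_
  rw [sum_piFinset_prod_mul_apply S p i fun k => (g i k - c i) ^ 2,
    sum_piFinset_prod_mul_apply S p i fun k => g i k ^ 2]
  exact mul_le_mul_of_nonneg_right (sum_mul_sq_sub_le (hp i) (hc i))
    (prod_nonneg fun l _ => sum_nonneg (hp l))

lemma sum_piFinset_prod_mul_apply_le (hp : ∀ i, ∀ k ∈ S i, 0 ≤ p i k) {i : ι}
    (hi : 1 ≤ ∑ k ∈ S i, p i k) {v : κ → ℝ} (hv : ∀ k ∈ S i, 0 ≤ v k) :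
    ∑ s ∈ Fintype.piFinset S, (∏ l, p l (s l)) * v (s i) ≤
      (∏ l, ∑ k ∈ S l, p l k) * ∑ k ∈ S i, p i k * v k := by
  rw [sum_piFinset_prod_mul_apply, mul_comm]
  refine mul_le_mul_of_nonneg_right ?_ (sum_nonneg fun k hk => mul_nonneg (hp i k hk) (hv k hk))
  rw [← mul_prod_erase _ _ (mem_univ i)]
  exact le_mul_of_one_le_left (prod_nonneg fun l _ => sum_nonneg (hp l)) hi

end Independent

section Pointwise

variable {ι : Type*} [Fintype ι]

lemma sq_sum_le_card_support_mul_sum_sq (x : ι → ℝ) :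
    (∑ i, x i) ^ 2 ≤ #{i | x i ≠ 0} * ∑ i, x i ^ 2 := by
  rw [← sum_filter_ne_zero]
  refine sq_sum_le_card_mul_sum_sq.trans (mul_le_mul_of_nonneg_left ?_ (Nat.cast_nonneg _))
  exact sum_le_univ_sum_of_nonneg fun i => sq_nonneg (x i)

lemma sq_sum_sub_le_of_eq_off {x y : ι → ℝ} {i : ι} (hxy : ∀ j ≠ i, x j = y j) (a : ℝ) :
    (∑ j, x j - a) ^ 2 ≤ 3 * ((∑ j, y j - a) ^ 2 + ∑ j, y j ^ 2) + 3 * x i ^ 2 := by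
  have hsum : ∑ j, x j - ∑ j, y j = x i - y i := by
    rw [← sum_sub_distrib]
    exact Fintype.sum_eq_single i fun j hj => sub_eq_zero.2 (hxy j hj)
  have hy : y i ^ 2 ≤ ∑ j, y j ^ 2 :=
    single_le_sum (f := fun j => y j ^ 2) (fun j _ => sq_nonneg (y j)) (mem_univ i)
  have hsplit : ∑ j, x j - a = (∑ j, y j - a) + x i - y i := by linarith
  rw [hsplit]
  generalize ∑ j, y j - a = b
  nlinarith [sq_nonneg (b - x i), sq_nonneg (b + y i), sq_nonneg (x i + y i)]

end Pointwise

/-! ### Component-size vectors -/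

/-- The total size `ℓ(s̄) = 1·s_1 + ⋯ + n·s_n`; the coordinate `j : Fin n` counts components of
size `j + 1`. -/
def totalSize {n : ℕ} (s : Fin n → ℕ) : ℕ := ∑ j : Fin n, ((j : ℕ) + 1) * s j

/-- The vectors of length `n` and total size `m`, so that `OmegaSet n` is `vectorsOfSize n n`.
Separating the two parameters makes every `Q(m)` with `m ≤ n` a sum over vectors of length `n`. -/
def vectorsOfSize (n m : ℕ) : Finset (Fin n → ℕ) :=
  {s ∈ Fintype.piFinset fun _ : Fin n => range (m + 1) | totalSize s = m}

/-- The vectors of length `n` with all entries at most `n`, the state space of the independent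
model. -/
def box (n : ℕ) : Finset (Fin n → ℕ) := Fintype.piFinset fun _ => range (n + 1)

/-- The squared deviation of `∑ j, g j (s j)` from `a` plus the sum of squares of its terms. The
second part pays for changing one coordinate of `s`. -/
def energy {n : ℕ} (g : Fin n → ℕ → ℝ) (a : ℝ) (s : Fin n → ℕ) : ℝ :=
  (∑ j, g j (s j) - a) ^ 2 + ∑ j, g j (s j) ^ 2

section Vectors

variable {n m : ℕ}

lemma succ_mul_apply_le_totalSize (s : Fin n → ℕ) (j : Fin n) :
    ((j : ℕ) + 1) * s j ≤ totalSize s :=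
  single_le_sum (f := fun j : Fin n => ((j : ℕ) + 1) * s j) (fun _ _ => Nat.zero_le _)
    (mem_univ j)

lemma apply_le_totalSize (s : Fin n → ℕ) (j : Fin n) : s j ≤ totalSize s :=
  (Nat.le_mul_of_pos_left _ j.val.succ_pos).trans (succ_mul_apply_le_totalSize s j)

lemma mem_vectorsOfSize {s : Fin n → ℕ} : s ∈ vectorsOfSize n m ↔ totalSize s = m := by
  simp only [vectorsOfSize, mem_filter, Fintype.mem_piFinset, mem_range, and_iff_right_iff_imp]
  exact fun hs j => Nat.lt_succ_of_le (hs ▸ apply_le_totalSize s j)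

lemma mem_OmegaSet {s : Fin n → ℕ} : s ∈ OmegaSet n ↔ totalSize s = n :=
  mem_vectorsOfSize

lemma vectorsOfSize_subset_box (hmn : m ≤ n) : vectorsOfSize n m ⊆ box n := fun s hs =>
  Fintype.mem_piFinset.2 fun j => mem_range.2 <| Nat.lt_succ_of_le <|
    (apply_le_totalSize s j).trans (mem_vectorsOfSize.1 hs ▸ hmn)

lemma totalSize_add_single (s : Fin n → ℕ) (i : Fin n) (k : ℕ) :
    totalSize (s + Pi.single i k) = totalSize s + ((i : ℕ) + 1) * k := by
  simp [totalSize, mul_add, sum_add_distrib, Pi.single_apply]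

lemma sub_single_add_single {s : Fin n → ℕ} {i : Fin n} {k : ℕ} (hk : k ≤ s i) :
    s - Pi.single i k + Pi.single i k = s := by
  refine tsub_add_cancel_of_le fun j => ?_
  obtain rfl | hj := eq_or_ne j i
  · simpa using hk
  · simp [Pi.single_eq_of_ne hj]

lemma sum_vectorsOfSize_filter_le {M : Type*} [AddCommMonoid M] (i : Fin n) {k : ℕ}
    (hk : ((i : ℕ) + 1) * k ≤ m) (f : (Fin n → ℕ) → M) :
    ∑ s ∈ vectorsOfSize n m with k ≤ s i, f s =
      ∑ t ∈ vectorsOfSize n (m - ((i : ℕ) + 1) * k), f (t + Pi.single i k) := by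
  symm
  refine sum_nbij' (fun t : Fin n → ℕ => t + Pi.single i k)
    (fun s : Fin n → ℕ => s - Pi.single i k) ?_ ?_ ?_ ?_ fun _ _ => rfl
  · intro t ht
    rw [mem_vectorsOfSize] at ht
    simp [mem_vectorsOfSize, totalSize_add_single, ht, hk]
  · intro s hs
    obtain ⟨hsize, hks⟩ := mem_filter.1 hs
    rw [mem_vectorsOfSize] at hsize ⊢
    rw [← hsize, ← congrArg totalSize (sub_single_add_single hks), totalSize_add_single]
    simp
  · exact fun t _ => add_tsub_cancel_right _ _
  · exact fun s hs => sub_single_add_single (mem_filter.1 hs).2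

lemma totalSize_append_zero (s : Fin m → ℕ) (d : ℕ) :
    totalSize (Fin.append s (0 : Fin d → ℕ)) = totalSize s := by
  simp [totalSize, Fin.sum_univ_add]

lemma sum_vectorsOfSize_eq_sum_OmegaSet {M : Type*} [AddCommMonoid M] (m d : ℕ)
    (f : (Fin (m + d) → ℕ) → M) :
    ∑ s ∈ vectorsOfSize (m + d) m, f s = ∑ s ∈ OmegaSet m, f (Fin.append s 0) := by
  have append_restrict : ∀ t ∈ vectorsOfSize (m + d) m,
      Fin.append (fun i => t (Fin.castAdd d i)) 0 = t := by
    intro t ht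
    have htail : (fun i => t (Fin.natAdd m i)) = 0 := by
      funext i
      have hle := succ_mul_apply_le_totalSize t (Fin.natAdd m i)
      rw [mem_vectorsOfSize.1 ht, Fin.val_natAdd] at hle
      by_contra hne
      have := (Nat.le_mul_of_pos_right _ (Nat.pos_of_ne_zero hne)).trans hle
      omega
    rw [← htail, Fin.append_castAdd_natAdd]
  refine (sum_nbij' (fun s => Fin.append s 0) (fun t i => t (Fin.castAdd d i))
    ?_ ?_ ?_ append_restrict fun _ _ => rfl).symm
  · intro s hs
    rw [mem_vectorsOfSize, totalSize_append_zero, mem_OmegaSet.1 hs]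
  · intro t ht
    rw [mem_OmegaSet, ← totalSize_append_zero _ d, append_restrict t ht, mem_vectorsOfSize.1 ht]
  · intro s _
    simp

lemma card_filter_totalSize_lt_mul_le (s : Fin n → ℕ) (c : ℕ) :
    #{j : Fin n | totalSize s < c * (((j : ℕ) + 1) * s j)} ≤ c := by
  set B : Finset (Fin n) := {j | totalSize s < c * (((j : ℕ) + 1) * s j)}
  have hcard : #B * (totalSize s + 1) ≤ c * totalSize s := by
    calc #B * (totalSize s + 1) = #B • (totalSize s + 1) := (smul_eq_mul ..).symm
      _ ≤ ∑ j ∈ B, c * (((j : ℕ) + 1) * s j) :=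
          card_nsmul_le_sum B _ _ fun j hj => (mem_filter.1 hj).2
      _ = c * ∑ j ∈ B, ((j : ℕ) + 1) * s j := (mul_sum ..).symm
      _ ≤ c * totalSize s := Nat.mul_le_mul_left c (sum_le_sum_of_subset (subset_univ B))
  refine Nat.le_of_mul_le_mul_right (hcard.trans ?_) (totalSize s).succ_pos
  exact Nat.mul_le_mul_left c (Nat.le_succ _)

lemma totalSize_mul_sq_le (g : Fin n → ℕ → ℝ) (a : ℝ) (s : Fin n → ℕ) :
    totalSize s * (∑ j, g j (s j) - a) ^ 2 ≤
      3 * ∑ i : Fin n, ((i : ℝ) + 1) * s i * energy g a (s - Pi.single i 1) +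
      3 * (totalSize s * ∑ j, g j (s j) ^ 2) := by
  have hsize : (totalSize s : ℝ) = ∑ i : Fin n, ((i : ℝ) + 1) * s i := by simp [totalSize]
  conv_lhs => rw [hsize]
  rw [sum_mul, mul_sum, mul_sum, mul_sum, ← sum_add_distrib]
  refine sum_le_sum fun i _ => ?_
  have hcoord : ((i : ℝ) + 1) * s i ≤ totalSize s := by
    exact_mod_cast succ_mul_apply_le_totalSize s i
  have hpoint := sq_sum_sub_le_of_eq_off (x := fun j => g j (s j))
    (y := fun j => g j ((s - Pi.single i 1 : Fin n → ℕ) j)) (i := i)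
    (fun j hj => by simp [Pi.single_eq_of_ne hj]) a
  have h₁ := mul_le_mul_of_nonneg_left hpoint (by positivity : 0 ≤ ((i : ℝ) + 1) * s i)
  have h₂ := mul_le_mul_of_nonneg_right hcoord (sq_nonneg (g i (s i)))
  rw [energy]
  linarith

end Vectors

/-! ### Weights and partition functions -/

section Weights

variable {lam : ℕ → ℝ} {n m : ℕ}

lemma wt_nonneg (hlam : ∀ j, 1 ≤ j → 0 ≤ lam j) (s : Fin n → ℕ) : 0 ≤ wt lam n s :=
  prod_nonneg fun j _ => div_nonneg (pow_nonneg (hlam _ j.val.succ_pos) _) (Nat.cast_nonneg _)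

lemma Qfun_nonneg (hlam : ∀ j, 1 ≤ j → 0 ≤ lam j) (n : ℕ) : 0 ≤ Qfun lam n :=
  sum_nonneg fun s _ => wt_nonneg hlam s

lemma wt_add_single_mul_factorial (lam : ℕ → ℝ) (s : Fin n → ℕ) (i : Fin n) (k : ℕ) :
    wt lam n (s + Pi.single i k) * ((s i + k)! : ℝ) =
      lam ((i : ℕ) + 1) ^ k * (wt lam n s * ((s i)! : ℝ)) := by
  have hoff : ∀ j ∈ univ.erase i, (s + Pi.single i k : Fin n → ℕ) j = s j := fun j hj => by
    simp [Pi.single_eq_of_ne (ne_of_mem_erase hj)]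
  unfold wt
  rw [← mul_prod_erase _ _ (mem_univ i), ← mul_prod_erase univ (fun j => _ / _) (mem_univ i),
    prod_congr rfl fun j hj => by rw [hoff j hj]]
  have hsk : ((s i + k)! : ℝ) ≠ 0 := by positivity
  have hs : ((s i)! : ℝ) ≠ 0 := by positivity
  simp only [Pi.add_apply, Pi.single_eq_same, pow_add]
  field_simp

lemma wt_append_zero (lam : ℕ → ℝ) (s : Fin m → ℕ) (d : ℕ) :
    wt lam (m + d) (Fin.append s 0) = wt lam m s := by
  simp [wt, Fin.prod_univ_add]

lemma Qfun_eq_sum_vectorsOfSize (lam : ℕ → ℝ) (hmn : m ≤ n) :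
    Qfun lam m = ∑ s ∈ vectorsOfSize n m, wt lam n s := by
  obtain ⟨d, rfl⟩ := Nat.exists_eq_add_of_le hmn
  simp only [sum_vectorsOfSize_eq_sum_OmegaSet, wt_append_zero, Qfun]

lemma Qj_eq_sum_vectorsOfSize (lam : ℕ → ℝ) (hmn : m ≤ n) (j : Fin n) :
    Qj lam ((j : ℕ) + 1) m = ∑ s ∈ vectorsOfSize n m with s j = 0, wt lam n s := by
  obtain ⟨d, rfl⟩ := Nat.exists_eq_add_of_le hmn
  have hcond (s : Fin m → ℕ) : (∀ i : Fin m, (i : ℕ) + 1 = (j : ℕ) + 1 → s i = 0) ↔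
      Fin.append s (0 : Fin d → ℕ) j = 0 := by
    refine Fin.addCases (fun j => ?_) (fun j => ?_) j
    · simp [← Fin.ext_iff]
    · simp only [Fin.val_natAdd, Fin.append_right, Pi.zero_apply, iff_true]
      omega
  simp only [Qj, sum_filter, sum_vectorsOfSize_eq_sum_OmegaSet, wt_append_zero, hcond]

lemma sum_wt_mul_apply_mul (lam : ℕ → ℝ) {i : Fin n} (hi : (i : ℕ) + 1 ≤ m)
    (f : (Fin n → ℕ) → ℝ) :
    ∑ s ∈ vectorsOfSize n m, wt lam n s * (s i * f s) =
      lam ((i : ℕ) + 1) *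
        ∑ t ∈ vectorsOfSize n (m - ((i : ℕ) + 1)), wt lam n t * f (t + Pi.single i 1) := by
  have hsupport : ∀ s ∈ vectorsOfSize n m, wt lam n s * (s i * f s) ≠ 0 → 1 ≤ s i := by
    intro s _ hne
    rw [Nat.one_le_iff_ne_zero]
    rintro hzero
    simp [hzero] at hne
  rw [← sum_filter_of_ne hsupport, sum_vectorsOfSize_filter_le i (by simpa using hi), mul_one,
    mul_sum]
  refine sum_congr rfl fun t _ => ?_
  have hwt := wt_add_single_mul_factorial lam t i 1
  have hfac : ((t i)! : ℝ) ≠ 0 := by positivity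
  rw [Nat.factorial_succ, Nat.cast_mul, pow_one, ← mul_assoc, ← mul_assoc] at hwt
  rw [← mul_assoc, ← mul_assoc, ← mul_right_cancel₀ hfac hwt]
  simp

lemma sum_wt_filter_apply_eq (lam : ℕ → ℝ) (j : Fin n) {k : ℕ} (hk : ((j : ℕ) + 1) * k ≤ n) :
    ∑ s ∈ OmegaSet n with s j = k, wt lam n s =
      lam ((j : ℕ) + 1) ^ k / (k ! : ℝ) * Qj lam ((j : ℕ) + 1) (n - ((j : ℕ) + 1) * k) := by
  have hfilter : ∑ s ∈ OmegaSet n with s j = k, wt lam n s =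
      ∑ s ∈ vectorsOfSize n n with k ≤ s j, if s j = k then wt lam n s else 0 := by
    rw [← sum_filter, filter_filter]
    refine sum_congr (filter_congr fun s _ => ?_) fun _ _ => rfl
    omega
  rw [hfilter, sum_vectorsOfSize_filter_le j hk, Qj_eq_sum_vectorsOfSize lam (Nat.sub_le ..) j,
    mul_sum, sum_filter]
  refine sum_congr rfl fun t _ => ?_
  have hshift : (t + Pi.single j k : Fin n → ℕ) j = k ↔ t j = 0 := by simp
  simp only [hshift]
  refine if_ctx_congr Iff.rfl (fun htj => ?_) fun _ => rfl
  have hwt := wt_add_single_mul_factorial lam t j k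
  rw [htj, zero_add, Nat.factorial_zero, Nat.cast_one, mul_one] at hwt
  rw [div_mul_eq_mul_div, ← hwt, mul_div_cancel_right₀ _ (by positivity)]

end Weights

/-! ### Expectations -/

section Expectation

variable {lam : ℕ → ℝ} {n : ℕ} {f g : (Fin n → ℕ) → ℝ}

lemma expectn_mono (hlam : ∀ j, 1 ≤ j → 0 ≤ lam j) (hfg : ∀ s, totalSize s = n → f s ≤ g s) :
    expectn lam n f ≤ expectn lam n g :=
  div_le_div_of_nonneg_right
    (sum_le_sum fun s hs => mul_le_mul_of_nonneg_left (hfg s (mem_OmegaSet.1 hs))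
      (wt_nonneg hlam s))
    (Qfun_nonneg hlam n)

lemma expectn_add (lam : ℕ → ℝ) (f g : (Fin n → ℕ) → ℝ) :
    expectn lam n (fun s => f s + g s) = expectn lam n f + expectn lam n g := by
  simp only [expectn, mul_add, sum_add_distrib, add_div]

lemma expectn_const_mul (lam : ℕ → ℝ) (c : ℝ) (f : (Fin n → ℕ) → ℝ) :
    expectn lam n (fun s => c * f s) = c * expectn lam n f := by
  simp only [expectn, mul_left_comm, ← mul_sum, mul_div_assoc]

lemma expectn_sum {ι : Type*} (lam : ℕ → ℝ) (t : Finset ι) (F : ι → (Fin n → ℕ) → ℝ) :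
    expectn lam n (fun s => ∑ i ∈ t, F i s) = ∑ i ∈ t, expectn lam n (F i) := by
  simp only [expectn, mul_sum, ← sum_div]
  rw [sum_comm]

lemma variancen_le_expectn_sq_sub (hQ : Qfun lam n ≠ 0) (f : (Fin n → ℕ) → ℝ) (a : ℝ) :
    variancen lam n f ≤ expectn lam n fun s => (f s - a) ^ 2 := by
  have hone : expectn lam n (fun _ => 1) = 1 := by
    simp only [expectn, mul_one]
    exact div_self hQ
  have hexpand : (expectn lam n fun s => (f s - a) ^ 2) =
      (expectn lam n fun s => f s ^ 2) + (-2 * a) * expectn lam n f + a ^ 2 := by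
    rw [← mul_one (a ^ 2), ← hone, ← expectn_const_mul, ← expectn_const_mul, ← expectn_add,
      ← expectn_add]
    exact congrArg _ (funext fun s => by ring)
  rw [hexpand, variancen]
  linarith [sq_nonneg (expectn lam n f - a)]

lemma expectn_apply (lam : ℕ → ℝ) (j : Fin n) (v : ℕ → ℝ) :
    expectn lam n (fun s => v (s j)) = ∑ k ∈ range (n + 1) with ((j : ℕ) + 1) * k ≤ n,
      lam ((j : ℕ) + 1) ^ k * v k / (k ! : ℝ) *
        (Qj lam ((j : ℕ) + 1) (n - ((j : ℕ) + 1) * k) / Qfun lam n) := by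
  have hmaps : ∀ s ∈ OmegaSet n, s j ∈ {k ∈ range (n + 1) | ((j : ℕ) + 1) * k ≤ n} := by
    intro s hs
    rw [mem_OmegaSet] at hs
    rw [mem_filter, mem_range, Nat.lt_succ_iff]
    exact ⟨(apply_le_totalSize s j).trans_eq hs, (succ_mul_apply_le_totalSize s j).trans_eq hs⟩
  rw [expectn, ← sum_fiberwise_of_maps_to hmaps, sum_div]
  refine sum_congr rfl fun k hk => ?_
  have hfiber : ∑ s ∈ OmegaSet n with s j = k, wt lam n s * v (s j) =
      (∑ s ∈ OmegaSet n with s j = k, wt lam n s) * v k := by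
    rw [sum_mul]
    exact sum_congr rfl fun s hs => by rw [(mem_filter.1 hs).2]
  rw [hfiber, sum_wt_filter_apply_eq lam j (mem_filter.1 hk).2]
  ring

lemma sum_Icc_one_eq_sum_fin {M : Type*} [AddCommMonoid M] (f : ℕ → M) (n : ℕ) :
    ∑ j ∈ Icc 1 n, f j = ∑ i : Fin n, f ((i : ℕ) + 1) := by
  rw [Fin.sum_univ_eq_sum_range (fun i => f (i + 1)) n, range_eq_Ico, sum_Ico_add' f 0 n 1]
  rfl

lemma expectn_sum_sq (lam : ℕ → ℝ) (n : ℕ) {h : ℕ → ℕ → ℝ} (h0 : ∀ j, h j 0 = 0) :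
    expectn lam n (fun s => ∑ j : Fin n, h ((j : ℕ) + 1) (s j) ^ 2) =
      ∑ p ∈ (Icc 1 n ×ˢ Icc 1 n).filter (fun p : ℕ × ℕ => p.1 * p.2 ≤ n),
        lam p.1 ^ p.2 * (h p.1 p.2) ^ 2 / (p.2 ! : ℝ) *
          (Qj lam p.1 (n - p.1 * p.2) / Qfun lam n) := by
  rw [expectn_sum, sum_filter, sum_product, sum_Icc_one_eq_sum_fin]
  refine sum_congr rfl fun j _ => ?_
  rw [expectn_apply lam j fun k => h ((j : ℕ) + 1) k ^ 2, sum_filter]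
  refine (sum_subset (fun k hk => ?_) fun k hk hk' => ?_).symm
  · exact mem_range.2 (Nat.lt_succ_of_le (mem_Icc.1 hk).2)
  · obtain rfl : k = 0 := by
      rw [mem_range] at hk
      rw [mem_Icc] at hk'
      omega
    simp [h0]

lemma wt_tilt (lam : ℕ → ℝ) (ρ : ℝ) (s : Fin n → ℕ) :
    wt (fun j => lam j * ρ ^ j) n s = ρ ^ totalSize s * wt lam n s := by
  unfold wt totalSize
  rw [← prod_pow_eq_pow_sum, ← prod_mul_distrib]
  refine prod_congr rfl fun j _ => ?_
  rw [mul_pow, ← pow_mul]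
  ring

lemma sum_OmegaSet_wt_tilt_mul (lam : ℕ → ℝ) (ρ : ℝ) (f : (Fin n → ℕ) → ℝ) :
    ∑ s ∈ OmegaSet n, wt (fun j => lam j * ρ ^ j) n s * f s =
      ρ ^ n * ∑ s ∈ OmegaSet n, wt lam n s * f s := by
  rw [mul_sum]
  exact sum_congr rfl fun s hs => by rw [wt_tilt, mem_OmegaSet.1 hs, mul_assoc]

lemma Qfun_tilt (lam : ℕ → ℝ) (ρ : ℝ) (n : ℕ) :
    Qfun (fun j => lam j * ρ ^ j) n = ρ ^ n * Qfun lam n := by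
  have htilt := sum_OmegaSet_wt_tilt_mul lam ρ fun _ : Fin n → ℕ => 1
  simp only [mul_one] at htilt
  exact htilt

lemma expectn_tilt (lam : ℕ → ℝ) {ρ : ℝ} (hρ : ρ ≠ 0) (f : (Fin n → ℕ) → ℝ) :
    expectn (fun j => lam j * ρ ^ j) n f = expectn lam n f := by
  rw [expectn, sum_OmegaSet_wt_tilt_mul, Qfun_tilt, mul_div_mul_left _ _ (pow_ne_zero n hρ),
    expectn]

end Expectation

/-! ### Comparison with independent components -/

section UpperBounds

variable {lam : ℕ → ℝ} {Θ : ℝ} {n m : ℕ}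

lemma one_le_sum_range_pow_div_factorial {x : ℝ} (hx : 0 ≤ x) (n : ℕ) :
    1 ≤ ∑ k ∈ range (n + 1), x ^ k / (k ! : ℝ) := by
  have := single_le_sum (f := fun k => x ^ k / (k ! : ℝ)) (fun k _ => by positivity)
    (mem_range.2 n.succ_pos)
  simpa using this

lemma prod_sum_range_pow_div_factorial_le_exp (hlam : ∀ j, 1 ≤ j → 0 ≤ lam j) (n : ℕ) :
    ∏ l : Fin n, ∑ k ∈ range (n + 1), lam ((l : ℕ) + 1) ^ k / (k ! : ℝ) ≤
      Real.exp (∑ j ∈ Icc 1 n, lam j) := by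
  rw [sum_Icc_one_eq_sum_fin, Real.exp_sum]
  refine prod_le_prod (fun l _ => ?_) fun l _ => ?_
  · exact zero_le_one.trans (one_le_sum_range_pow_div_factorial (hlam _ l.val.succ_pos) n)
  · exact Real.sum_le_exp_of_nonneg (hlam _ l.val.succ_pos) _

lemma sum_box_wt_le_exp (hlam : ∀ j, 1 ≤ j → 0 ≤ lam j) (n : ℕ) :
    ∑ s ∈ box n, wt lam n s ≤ Real.exp (∑ j ∈ Icc 1 n, lam j) :=
  (prod_univ_sum (fun _ : Fin n => range (n + 1)) _).symm.trans_le
    (prod_sum_range_pow_div_factorial_le_exp hlam n)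

lemma exists_sum_box_wt_mul_energy_le (hlam : ∀ j, 1 ≤ j → 0 ≤ lam j) (g : Fin n → ℕ → ℝ) :
    ∃ a, ∑ s ∈ box n, wt lam n s * energy g a s ≤
      2 * (Real.exp (∑ j ∈ Icc 1 n, lam j) *
        ∑ l : Fin n, ∑ k ∈ range (n + 1), lam ((l : ℕ) + 1) ^ k / (k ! : ℝ) * g l k ^ 2) := by
  set p : Fin n → ℕ → ℝ := fun l k => lam ((l : ℕ) + 1) ^ k / (k ! : ℝ)
  have hp : ∀ l k, 0 ≤ p l k := fun l k =>
    div_nonneg (pow_nonneg (hlam _ l.val.succ_pos) k) (Nat.cast_nonneg _)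
  obtain ⟨a, ha⟩ := exists_sum_piFinset_prod_mul_sq_sub_le (S := fun _ => range (n + 1))
    (fun l k _ => hp l k) g
  have hsquares : ∑ i, ∑ s ∈ box n, wt lam n s * g i (s i) ^ 2 ≤
      Real.exp (∑ j ∈ Icc 1 n, lam j) * ∑ l, ∑ k ∈ range (n + 1), p l k * g l k ^ 2 := by
    rw [mul_sum]
    refine sum_le_sum fun i _ => (sum_piFinset_prod_mul_apply_le (fun l k _ => hp l k)
      (one_le_sum_range_pow_div_factorial (hlam _ i.val.succ_pos) n)
      (v := fun k => g i k ^ 2) fun k _ => sq_nonneg _).trans ?_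
    exact mul_le_mul_of_nonneg_right (prod_sum_range_pow_div_factorial_le_exp hlam n)
      (sum_nonneg fun k _ => mul_nonneg (hp i k) (sq_nonneg _))
  have hsplit : ∑ s ∈ box n, wt lam n s * energy g a s =
      ∑ s ∈ box n, wt lam n s * (∑ j, g j (s j) - a) ^ 2 +
        ∑ i, ∑ s ∈ box n, wt lam n s * g i (s i) ^ 2 := by
    simp only [energy, mul_add, sum_add_distrib, mul_sum]
    rw [sum_comm (s := box n)]
  refine ⟨a, ?_⟩
  rw [hsplit, two_mul]
  exact add_le_add (ha.trans hsquares) hsquares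

lemma sum_sum_vectorsOfSize_le_sum_box {F : (Fin n → ℕ) → ℝ} (hF : ∀ s, 0 ≤ F s) :
    ∑ i : Fin n, ∑ s ∈ vectorsOfSize n (n - ((i : ℕ) + 1)), F s ≤ ∑ s ∈ box n, F s := by
  rw [← sum_biUnion]
  · refine sum_le_sum_of_subset_of_nonneg (biUnion_subset.2 fun i _ => ?_) fun s _ _ => hF s
    exact vectorsOfSize_subset_box (Nat.sub_le ..)
  · intro i _ j _ hij
    refine disjoint_left.2 fun s hsi hsj => hij (Fin.ext ?_)
    have := (mem_vectorsOfSize.1 hsi).symm.trans (mem_vectorsOfSize.1 hsj)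
    omega

-- Removing a component of size `i + 1` multiplies the weight by at most `Θ / ((i + 1) * s i)` and
-- lands on the level `n - (i + 1)`; these levels are disjoint, so all removals fit in one box sum.
lemma sum_wt_mul_sum_sub_single_le (hlam : ∀ j, 1 ≤ j → 0 ≤ lam j)
    (hmul : ∀ j : ℕ, 1 ≤ j → j * lam j ≤ Θ) {F : (Fin n → ℕ) → ℝ} (hF : ∀ s, 0 ≤ F s) :
    ∑ s ∈ OmegaSet n, wt lam n s * ∑ i : Fin n, ((i : ℝ) + 1) * s i * F (s - Pi.single i 1) ≤
      Θ * ∑ s ∈ box n, wt lam n s * F s := by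
  have hΘ : 0 ≤ Θ := (hlam 1 le_rfl).trans (by simpa using hmul 1 le_rfl)
  have hwF (s) : 0 ≤ wt lam n s * F s := mul_nonneg (wt_nonneg hlam s) (hF s)
  have hremove (i : Fin n) :
      ∑ s ∈ OmegaSet n, wt lam n s * (((i : ℝ) + 1) * s i * F (s - Pi.single i 1)) =
        ((i : ℕ) + 1 : ℕ) * lam ((i : ℕ) + 1) *
          ∑ s ∈ vectorsOfSize n (n - ((i : ℕ) + 1)), wt lam n s * F s := by
    have hshift := sum_wt_mul_apply_mul lam (m := n) (Nat.succ_le_of_lt i.2)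
      fun s => F (s - Pi.single i 1)
    simp only [add_tsub_cancel_right] at hshift
    rw [mul_assoc, ← hshift, mul_sum]
    refine sum_congr rfl fun s _ => ?_
    push_cast
    ring
  refine le_trans ?_ (mul_le_mul_of_nonneg_left (sum_sum_vectorsOfSize_le_sum_box hwF) hΘ)
  simp only [mul_sum (s := univ)]
  rw [sum_comm]
  refine sum_le_sum fun i _ => (hremove i).trans_le ?_
  exact mul_le_mul_of_nonneg_right (hmul _ i.val.succ_pos) (sum_nonneg fun s _ => hwF s)

lemma mul_Qfun_le_mul_exp (hlam : ∀ j, 1 ≤ j → 0 ≤ lam j)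
    (hmul : ∀ j : ℕ, 1 ≤ j → j * lam j ≤ Θ) (n : ℕ) :
    n * Qfun lam n ≤ Θ * Real.exp (∑ j ∈ Icc 1 n, lam j) := by
  have hΘ : 0 ≤ Θ := (hlam 1 le_rfl).trans (by simpa using hmul 1 le_rfl)
  have hsize : n * Qfun lam n =
      ∑ s ∈ OmegaSet n, wt lam n s * ∑ i : Fin n, ((i : ℝ) + 1) * s i * 1 := by
    rw [Qfun, mul_sum]
    refine sum_congr rfl fun s hs => ?_
    nth_rw 1 [← mem_OmegaSet.1 hs]
    simp [totalSize, mul_comm]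
  rw [hsize]
  refine (sum_wt_mul_sum_sub_single_le hlam hmul fun _ => zero_le_one).trans ?_
  simpa only [mul_one] using mul_le_mul_of_nonneg_left (sum_box_wt_le_exp hlam n) hΘ

lemma sum_Icc_le_sum_Icc_add (hlam : ∀ j, 1 ≤ j → 0 ≤ lam j)
    (hmul : ∀ j : ℕ, 1 ≤ j → j * lam j ≤ Θ) (hm : 1 ≤ m) (hmn : m ≤ n) (hnm : n ≤ 2 * m) :
    ∑ j ∈ Icc 1 n, lam j ≤ ∑ j ∈ Icc 1 m, lam j + Θ := by
  have hm_pos : (0 : ℝ) < m := by exact_mod_cast hm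
  have hterm : ∀ j ∈ Ioc m n, m * lam j ≤ Θ := fun j hj => by
    have hmj := (mem_Ioc.1 hj).1.le
    have hj_one := hm.trans hmj
    exact (mul_le_mul_of_nonneg_right (by exact_mod_cast hmj) (hlam j hj_one)).trans
      (hmul j hj_one)
  have hΘ : 0 ≤ Θ := (hlam 1 le_rfl).trans (by simpa using hmul 1 le_rfl)
  have htail : m * ∑ j ∈ Ioc m n, lam j ≤ m * Θ := by
    rw [mul_sum]
    refine (sum_le_card_nsmul _ _ _ hterm).trans ?_
    rw [nsmul_eq_mul, Nat.card_Ioc]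
    exact mul_le_mul_of_nonneg_right (by exact_mod_cast (by omega : n - m ≤ m)) hΘ
  have hsplit : ∑ j ∈ Icc 1 m, lam j + ∑ j ∈ Ioc m n, lam j = ∑ j ∈ Icc 1 n, lam j :=
    sum_Ioc_consecutive lam m.zero_le hmn
  linarith [le_of_mul_le_mul_left htail hm_pos]

lemma Qfun_le_Qj_add (hlam : ∀ j, 1 ≤ j → 0 ≤ lam j) {j : ℕ} (hj : 1 ≤ j) (hjm : j ≤ m) :
    Qfun lam m ≤ Qj lam j m + lam j * Qfun lam (m - j) := by
  obtain ⟨i, rfl⟩ : ∃ i : Fin m, j = (i : ℕ) + 1 := ⟨⟨j - 1, by omega⟩, by simp; omega⟩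
  have hshift := sum_wt_mul_apply_mul lam (m := m) hjm fun _ => 1
  simp only [mul_one] at hshift
  rw [Qj_eq_sum_vectorsOfSize lam le_rfl i, Qfun_eq_sum_vectorsOfSize lam (Nat.sub_le m _),
    ← hshift, sum_filter, ← sum_add_distrib]
  refine sum_le_sum fun s _ => ?_
  split_ifs with hs
  · simp [hs]
  · have : (1 : ℝ) ≤ s i := by exact_mod_cast Nat.one_le_iff_ne_zero.2 hs
    simpa using le_mul_of_one_le_right (wt_nonneg hlam s) this

end UpperBounds

/-! ### Logarithmic weights -/

/-- Conditions (i) and (iii) of a weakly logarithmic class after the tilt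
`λ_j ↦ λ_j ρ^j`, which reduces to `ρ = 1`. -/
structure IsLogarithmicWeight (lam : ℕ → ℝ) (Θ θ' : ℝ) : Prop where
  nonneg : ∀ j, 1 ≤ j → 0 ≤ lam j
  mul_le : ∀ j : ℕ, 1 ≤ j → j * lam j ≤ Θ
  pos : 0 < θ'
  exp_le : ∀ n : ℕ, 1 ≤ n → θ' * Real.exp (∑ j ∈ Icc 1 n, lam j) ≤ n * Qfun lam n

/-- The size from which a prescribed component size costs at most half of the partition
function, see `IsLogarithmicWeight.Qfun_le_two_mul_Qj`. -/
noncomputable def sizeCutoff (Θ θ' : ℝ) : ℕ := ⌈4 * Θ ^ 2 / θ'⌉₊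

/-- The constant lost in passing from the additive function restricted to small components to
independent components. -/
noncomputable def smallPartConst (Θ θ' : ℝ) : ℝ := 3 + 12 * Θ ^ 2 * Real.exp Θ / θ' ^ 2

namespace IsLogarithmicWeight

variable {lam : ℕ → ℝ} {Θ θ' : ℝ} {n m : ℕ}

lemma bound_nonneg (hw : IsLogarithmicWeight lam Θ θ') : 0 ≤ Θ :=
  (hw.nonneg 1 le_rfl).trans (by simpa using hw.mul_le 1 le_rfl)

lemma Qfun_pos (hw : IsLogarithmicWeight lam Θ θ') (hn : 1 ≤ n) : 0 < Qfun lam n :=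
  pos_of_mul_pos_right ((mul_pos hw.pos (Real.exp_pos _)).trans_le (hw.exp_le n hn))
    (Nat.cast_nonneg n)

lemma mul_Qfun_le_of_le (hw : IsLogarithmicWeight lam Θ θ') (hm : 1 ≤ m) (hmn : m ≤ n)
    (hnm : n ≤ 2 * m) : θ' * Qfun lam n ≤ Θ * Real.exp Θ * Qfun lam m := by
  have hn_pos : (0 : ℝ) < n := by exact_mod_cast hm.trans hmn
  have hΘ := hw.bound_nonneg
  have hQ := (hw.Qfun_pos hm).le
  have hθ' := hw.pos.le
  refine le_of_mul_le_mul_left ?_ hn_pos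
  calc n * (θ' * Qfun lam n) = θ' * (n * Qfun lam n) := by ring
    _ ≤ θ' * (Θ * Real.exp (∑ j ∈ Icc 1 n, lam j)) := by
        gcongr θ' * ?_; exact mul_Qfun_le_mul_exp hw.nonneg hw.mul_le n
    _ ≤ θ' * (Θ * Real.exp (∑ j ∈ Icc 1 m, lam j + Θ)) := by
        gcongr; exact sum_Icc_le_sum_Icc_add hw.nonneg hw.mul_le hm hmn hnm
    _ = Θ * Real.exp Θ * (θ' * Real.exp (∑ j ∈ Icc 1 m, lam j)) := by rw [Real.exp_add]; ring
    _ ≤ Θ * Real.exp Θ * (m * Qfun lam m) := by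
        gcongr Θ * Real.exp Θ * ?_; exact hw.exp_le m hm
    _ ≤ Θ * Real.exp Θ * (n * Qfun lam m) := by gcongr
    _ = n * (Θ * Real.exp Θ * Qfun lam m) := by ring

lemma mul_Qfun_le_of_ge (hw : IsLogarithmicWeight lam Θ θ') (hm : 1 ≤ m) (hmn : m ≤ n)
    (hnm : n ≤ 2 * m) : θ' * Qfun lam m ≤ 2 * Θ * Qfun lam n := by
  have hm_pos : (0 : ℝ) < m := by exact_mod_cast hm
  have hΘ := hw.bound_nonneg
  have hQ := (hw.Qfun_pos (hm.trans hmn)).le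
  have hθ' := hw.pos.le
  refine le_of_mul_le_mul_left ?_ hm_pos
  calc m * (θ' * Qfun lam m) = θ' * (m * Qfun lam m) := by ring
    _ ≤ θ' * (Θ * Real.exp (∑ j ∈ Icc 1 m, lam j)) := by
        gcongr θ' * ?_; exact mul_Qfun_le_mul_exp hw.nonneg hw.mul_le m
    _ ≤ θ' * (Θ * Real.exp (∑ j ∈ Icc 1 n, lam j)) := by
        gcongr θ' * (Θ * Real.exp ?_)
        exact sum_le_sum_of_subset_of_nonneg (Icc_subset_Icc_right hmn)
          fun j hj _ => hw.nonneg j (mem_Icc.1 hj).1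
    _ = Θ * (θ' * Real.exp (∑ j ∈ Icc 1 n, lam j)) := by ring
    _ ≤ Θ * (n * Qfun lam n) := by gcongr Θ * ?_; exact hw.exp_le n (hm.trans hmn)
    _ ≤ Θ * (2 * m * Qfun lam n) := by gcongr; exact_mod_cast hnm
    _ = m * (2 * Θ * Qfun lam n) := by ring

lemma Qfun_le_two_mul_Qj (hw : IsLogarithmicWeight lam Θ θ') {j : ℕ} (hj : 1 ≤ j)
    (hcut : sizeCutoff Θ θ' ≤ j) (hjm : 2 * j ≤ m) : Qfun lam m ≤ 2 * Qj lam j m := by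
  have hj_pos : (0 : ℝ) < j := by exact_mod_cast hj
  have hΘ := hw.bound_nonneg
  have hQ := (hw.Qfun_pos (by omega : 1 ≤ m)).le
  have hcut' : 4 * Θ ^ 2 ≤ j * θ' :=
    (div_le_iff₀ hw.pos).1 ((Nat.le_ceil _).trans (by exact_mod_cast hcut))
  have hloss : j * θ' * (2 * (lam j * Qfun lam (m - j))) ≤ j * θ' * Qfun lam m := by
    calc j * θ' * (2 * (lam j * Qfun lam (m - j)))
        = 2 * (j * lam j) * (θ' * Qfun lam (m - j)) := by ring
      _ ≤ 2 * Θ * (2 * Θ * Qfun lam m) := by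
          have hQ' := mul_nonneg hw.pos.le (Qfun_nonneg hw.nonneg (m - j))
          gcongr 2 * ?_ * ?_
          · exact hw.mul_le j hj
          · exact hw.mul_Qfun_le_of_ge (by omega) (Nat.sub_le m j) (by omega)
      _ = 4 * Θ ^ 2 * Qfun lam m := by ring
      _ ≤ j * θ' * Qfun lam m := by gcongr
  have := le_of_mul_le_mul_left hloss (mul_pos hj_pos hw.pos)
  linarith [Qfun_le_Qj_add hw.nonneg hj (by omega : j ≤ m)]

lemma mul_Qfun_le_mul_Qj (hw : IsLogarithmicWeight lam Θ θ') {j : ℕ} (hj : 1 ≤ j)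
    (hcut : sizeCutoff Θ θ' ≤ j) (hjm : j ≤ m) (hmn : 3 * m ≤ n) :
    θ' * Qfun lam n ≤ 2 * Θ * Real.exp Θ * Qj lam j (n - m) := by
  have hΘ := hw.bound_nonneg
  calc θ' * Qfun lam n ≤ Θ * Real.exp Θ * Qfun lam (n - m) :=
        hw.mul_Qfun_le_of_le (by omega) (Nat.sub_le n m) (by omega)
    _ ≤ Θ * Real.exp Θ * (2 * Qj lam j (n - m)) := by
        gcongr; exact hw.Qfun_le_two_mul_Qj hj hcut (by omega)
    _ = 2 * Θ * Real.exp Θ * Qj lam j (n - m) := by ring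

lemma mul_sum_pow_div_factorial_mul_sq_le (hw : IsLogarithmicWeight lam Θ θ') {j : Fin n}
    {v : ℕ → ℝ} (hv : ∀ k, v k ≠ 0 →
      1 ≤ k ∧ sizeCutoff Θ θ' ≤ (j : ℕ) + 1 ∧ 3 * (((j : ℕ) + 1) * k) ≤ n) :
    θ' * ∑ k ∈ range (n + 1), lam ((j : ℕ) + 1) ^ k / (k ! : ℝ) * v k ^ 2 ≤
      2 * Θ * Real.exp Θ * expectn lam n fun s => v (s j) ^ 2 := by
  have hn : 1 ≤ n := j.pos
  have hQ := hw.Qfun_pos hn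
  rw [expectn_apply lam j fun k => v k ^ 2, sum_filter, mul_sum, mul_sum]
  refine sum_le_sum fun k _ => ?_
  by_cases hvk : v k = 0
  · simp [hvk]
  obtain ⟨hk, hcut, hkn⟩ := hv k hvk
  rw [if_pos (by omega)]
  have hratio : θ' ≤ 2 * Θ * Real.exp Θ *
      (Qj lam ((j : ℕ) + 1) (n - ((j : ℕ) + 1) * k) / Qfun lam n) := by
    rw [← mul_div_assoc, le_div_iff₀ hQ]
    exact hw.mul_Qfun_le_mul_Qj (by omega) hcut (Nat.le_mul_of_pos_right _ hk) hkn
  have hterm : 0 ≤ lam ((j : ℕ) + 1) ^ k / (k ! : ℝ) * v k ^ 2 :=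
    mul_nonneg (div_nonneg (pow_nonneg (hw.nonneg _ (by omega)) k) (Nat.cast_nonneg _))
      (sq_nonneg _)
  refine (mul_le_mul_of_nonneg_right hratio hterm).trans_eq ?_
  ring

lemma exists_mul_expectn_sum_energy_le (hw : IsLogarithmicWeight lam Θ θ') (hn : 1 ≤ n)
    (g : Fin n → ℕ → ℝ) :
    ∃ a, θ' * expectn lam n (fun s =>
        ∑ i : Fin n, ((i : ℝ) + 1) * s i * energy g a (s - Pi.single i 1)) ≤
      2 * Θ * n * ∑ l : Fin n, ∑ k ∈ range (n + 1),
        lam ((l : ℕ) + 1) ^ k / (k ! : ℝ) * g l k ^ 2 := by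
  obtain ⟨a, ha⟩ := exists_sum_box_wt_mul_energy_le hw.nonneg g
  refine ⟨a, ?_⟩
  have hΘ := hw.bound_nonneg
  have hθ' := hw.pos.le
  set D := ∑ l : Fin n, ∑ k ∈ range (n + 1), lam ((l : ℕ) + 1) ^ k / (k ! : ℝ) * g l k ^ 2
  have hD : 0 ≤ D := sum_nonneg fun l _ => sum_nonneg fun k _ =>
    mul_nonneg (div_nonneg (pow_nonneg (hw.nonneg _ (by omega)) k) (Nat.cast_nonneg _))
      (sq_nonneg _)
  have henergy (s : Fin n → ℕ) : 0 ≤ energy g a s :=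
    add_nonneg (sq_nonneg _) (sum_nonneg fun _ _ => sq_nonneg _)
  rw [expectn, ← mul_div_assoc, div_le_iff₀ (hw.Qfun_pos hn)]
  calc θ' * ∑ s ∈ OmegaSet n,
          wt lam n s * ∑ i : Fin n, ((i : ℝ) + 1) * s i * energy g a (s - Pi.single i 1)
      ≤ θ' * (Θ * ∑ s ∈ box n, wt lam n s * energy g a s) := by
        gcongr; exact sum_wt_mul_sum_sub_single_le hw.nonneg hw.mul_le henergy
    _ ≤ θ' * (Θ * (2 * (Real.exp (∑ j ∈ Icc 1 n, lam j) * D))) := by gcongr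
    _ = 2 * Θ * D * (θ' * Real.exp (∑ j ∈ Icc 1 n, lam j)) := by ring
    _ ≤ 2 * Θ * D * (n * Qfun lam n) := by gcongr 2 * Θ * D * ?_; exact hw.exp_le n hn
    _ = 2 * Θ * n * D * Qfun lam n := by ring

lemma mul_expectn_sq_sub_le (hw : IsLogarithmicWeight lam Θ θ') (g : Fin n → ℕ → ℝ) (a : ℝ) :
    n * expectn lam n (fun s => (∑ j, g j (s j) - a) ^ 2) ≤
      3 * expectn lam n (fun s =>
          ∑ i : Fin n, ((i : ℝ) + 1) * s i * energy g a (s - Pi.single i 1)) +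
        3 * (n * expectn lam n fun s => ∑ j, g j (s j) ^ 2) := by
  simp only [← expectn_const_mul, ← expectn_add]
  refine expectn_mono hw.nonneg fun s hs => ?_
  have hpoint := totalSize_mul_sq_le g a s
  rwa [hs] at hpoint

lemma exists_expectn_sq_sub_le_of_small (hw : IsLogarithmicWeight lam Θ θ') (hn : 1 ≤ n)
    {g : Fin n → ℕ → ℝ} (hg : ∀ j k, g j k ≠ 0 →
      1 ≤ k ∧ sizeCutoff Θ θ' ≤ (j : ℕ) + 1 ∧ 3 * (((j : ℕ) + 1) * k) ≤ n) :
    ∃ a, expectn lam n (fun s => (∑ j, g j (s j) - a) ^ 2) ≤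
      smallPartConst Θ θ' * expectn lam n fun s => ∑ j, g j (s j) ^ 2 := by
  obtain ⟨a, ha⟩ := hw.exists_mul_expectn_sum_energy_le hn g
  refine ⟨a, ?_⟩
  have hθ' := hw.pos
  have hΘ := hw.bound_nonneg
  have hn_pos : (0 : ℝ) < n := by exact_mod_cast hn
  have hsize := hw.mul_expectn_sq_sub_le g a
  set E := expectn lam n fun s => ∑ j, g j (s j) ^ 2 with hE
  set D := ∑ l : Fin n, ∑ k ∈ range (n + 1), lam ((l : ℕ) + 1) ^ k / (k ! : ℝ) * g l k ^ 2
  set R := expectn lam n fun s =>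
    ∑ i : Fin n, ((i : ℝ) + 1) * s i * energy g a (s - Pi.single i 1)
  have hD : θ' * D ≤ 2 * Θ * Real.exp Θ * E := by
    rw [hE, expectn_sum, mul_sum, mul_sum]
    exact sum_le_sum fun j _ => hw.mul_sum_pow_div_factorial_mul_sq_le (hg j)
  have hR : R ≤ 4 * Θ ^ 2 * Real.exp Θ / θ' ^ 2 * n * E := by
    rw [div_mul_eq_mul_div, div_mul_eq_mul_div, le_div_iff₀ (by positivity)]
    calc R * θ' ^ 2 = θ' * (θ' * R) := by ring
      _ ≤ θ' * (2 * Θ * n * D) := by gcongr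
      _ = 2 * Θ * n * (θ' * D) := by ring
      _ ≤ 2 * Θ * n * (2 * Θ * Real.exp Θ * E) := by gcongr
      _ = 4 * Θ ^ 2 * Real.exp Θ * n * E := by ring
  refine le_of_mul_le_mul_left (hsize.trans ?_) hn_pos
  calc 3 * R + 3 * (n * E) ≤ 3 * (4 * Θ ^ 2 * Real.exp Θ / θ' ^ 2 * n * E) + 3 * (n * E) := by
        gcongr
    _ = n * (smallPartConst Θ θ' * E) := by rw [smallPartConst]; ring

end IsLogarithmicWeight

lemma sq_sum_le_of_large {n J : ℕ} {b : Fin n → ℕ → ℝ} (hb : ∀ j k, b j k ≠ 0 →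
      (j : ℕ) < J ∨ n < 3 * (((j : ℕ) + 1) * k)) {s : Fin n → ℕ} (hs : totalSize s = n) :
    (∑ j, b j (s j)) ^ 2 ≤ (J + 3) * ∑ j, b j (s j) ^ 2 := by
  have hcard : #{j | b j (s j) ≠ 0} ≤ J + 3 := calc
    #{j | b j (s j) ≠ 0}
      ≤ #({j | (j : ℕ) < J ∨ totalSize s < 3 * (((j : ℕ) + 1) * s j)} : Finset (Fin n)) :=
        card_le_card fun j hj => by simpa [hs] using hb j (s j) (mem_filter.1 hj).2
    _ ≤ #{j : Fin n | (j : ℕ) < J} + #{j : Fin n | totalSize s < 3 * (((j : ℕ) + 1) * s j)} := by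
        rw [filter_or]; exact card_union_le _ _
    _ ≤ J + 3 := Nat.add_le_add
        (Fin.card_filter_val_lt.trans_le (min_le_right n J)) (card_filter_totalSize_lt_mul_le s 3)
  refine (sq_sum_le_card_support_mul_sum_sq fun j => b j (s j)).trans ?_
  gcongr
  exact_mod_cast hcard

lemma exists_eq_small_add_large {n : ℕ} (J : ℕ) {h : Fin n → ℕ → ℝ} (h0 : ∀ j, h j 0 = 0) :
    ∃ g b : Fin n → ℕ → ℝ,
      (∀ j k, g j k ≠ 0 → 1 ≤ k ∧ J ≤ (j : ℕ) + 1 ∧ 3 * (((j : ℕ) + 1) * k) ≤ n) ∧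
      (∀ j k, b j k ≠ 0 → (j : ℕ) < J ∨ n < 3 * (((j : ℕ) + 1) * k)) ∧
      (∀ j k, h j k = g j k + b j k) ∧ ∀ j k, h j k ^ 2 = g j k ^ 2 + b j k ^ 2 := by
  refine ⟨fun j k => if J ≤ (j : ℕ) + 1 ∧ 3 * (((j : ℕ) + 1) * k) ≤ n then h j k else 0,
    fun j k => if J ≤ (j : ℕ) + 1 ∧ 3 * (((j : ℕ) + 1) * k) ≤ n then 0 else h j k,
    fun j k hne => ?_, fun j k hne => ?_, fun j k => ?_, fun j k => ?_⟩
  · obtain ⟨hsmall, hne⟩ := ite_ne_right_iff.1 hne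
    exact ⟨Nat.one_le_iff_ne_zero.2 fun hk => hne (hk ▸ h0 j), hsmall⟩
  · have hlarge := (ite_ne_left_iff.1 hne).1
    omega
  · beta_reduce; split_ifs <;> simp
  · beta_reduce; split_ifs <;> simp

/-- The constant `C` of the variance inequality. -/
noncomputable def varianceConst (Θ θ' : ℝ) : ℝ :=
  2 * smallPartConst Θ θ' + 2 * (sizeCutoff Θ θ' + 3)

lemma varianceConst_pos (Θ θ' : ℝ) : 0 < varianceConst Θ θ' := by
  unfold varianceConst smallPartConst
  positivity

theorem IsLogarithmicWeight.variancen_le {lam : ℕ → ℝ} {Θ θ' : ℝ} {n : ℕ}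
    (hw : IsLogarithmicWeight lam Θ θ') (hn : 1 ≤ n) {h : Fin n → ℕ → ℝ} (h0 : ∀ j, h j 0 = 0) :
    variancen lam n (fun s => ∑ j, h j (s j)) ≤
      varianceConst Θ θ' * expectn lam n fun s => ∑ j, h j (s j) ^ 2 := by
  obtain ⟨g, b, hg, hb, hadd, hsq⟩ := exists_eq_small_add_large (sizeCutoff Θ θ') h0
  obtain ⟨a, ha⟩ := hw.exists_expectn_sq_sub_le_of_small hn hg
  have hpoint : ∀ s : Fin n → ℕ, totalSize s = n → (∑ j, h j (s j) - a) ^ 2 ≤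
      2 * (∑ j, g j (s j) - a) ^ 2 +
        2 * (sizeCutoff Θ θ' + 3) * ∑ j, b j (s j) ^ 2 := by
    intro s hs
    have hlarge := sq_sum_le_of_large hb hs
    have hcs := add_sq_le (a := ∑ j, g j (s j) - a) (b := ∑ j, b j (s j))
    simp only [hadd, sum_add_distrib]
    rw [add_sub_right_comm]
    linarith
  have hnonneg (v : Fin n → ℕ → ℝ) : 0 ≤ expectn lam n fun s => ∑ j, v j (s j) ^ 2 :=
    div_nonneg (sum_nonneg fun s _ => mul_nonneg (wt_nonneg hw.nonneg s)
      (sum_nonneg fun j _ => sq_nonneg _)) (hw.Qfun_pos hn).le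
  have hconst : 0 ≤ smallPartConst Θ θ' := by unfold smallPartConst; positivity
  refine (variancen_le_expectn_sq_sub (hw.Qfun_pos hn).ne' _ a).trans ?_
  refine (expectn_mono hw.nonneg hpoint).trans ?_
  simp only [hsq, sum_add_distrib, expectn_add, expectn_const_mul, varianceConst]
  have hg_nonneg := mul_nonneg (by positivity : (0 : ℝ) ≤ sizeCutoff Θ θ' + 3) (hnonneg g)
  have hb_nonneg := mul_nonneg hconst (hnonneg b)
  linarith

lemma isLogarithmicWeight_tilt {ρ Θ θ' : ℝ} {lam : ℕ → ℝ} (hρ : 0 ≤ ρ) (hθ' : 0 < θ')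
    (hlam : ∀ j, 1 ≤ j → 0 ≤ lam j) (hmul : ∀ j : ℕ, 1 ≤ j → ρ ^ j * j * lam j ≤ Θ)
    (hQ : ∀ n : ℕ, 1 ≤ n →
      θ' * Real.exp (∑ j ∈ Icc 1 n, lam j * ρ ^ j) ≤ n * Qfun lam n * ρ ^ n) :
    IsLogarithmicWeight (fun j => lam j * ρ ^ j) Θ θ' where
  nonneg j hj := mul_nonneg (hlam j hj) (pow_nonneg hρ j)
  mul_le j hj := (by ring : (j : ℝ) * (lam j * ρ ^ j) = ρ ^ j * j * lam j).trans_le (hmul j hj)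
  pos := hθ'
  exp_le n hn := (hQ n hn).trans_eq (by rw [Qfun_tilt]; ring)

lemma variancen_tilt (lam : ℕ → ℝ) {ρ : ℝ} (hρ : ρ ≠ 0) {n : ℕ} (f : (Fin n → ℕ) → ℝ) :
    variancen (fun j => lam j * ρ ^ j) n f = variancen lam n f := by
  simp only [variancen, expectn_tilt lam hρ]

end Assembly

open Assembly in
theorem variance_additive_weakly_logarithmic_general (Θ θ' : ℝ) (hθ' : 0 < θ') :
    ∃ C : ℝ, 0 < C ∧
      ∀ ρ : ℝ, 0 < ρ → ∀ lam : ℕ → ℝ,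
        (∀ j, 1 ≤ j → 0 ≤ lam j) →
        (∀ j, 1 ≤ j → ρ ^ j * j * lam j ≤ Θ) →
        (∀ n : ℕ, 1 ≤ n →
          θ' * Real.exp (∑ j ∈ Icc 1 n, lam j * ρ ^ j) ≤ n * Qfun lam n * ρ ^ n) →
        ∀ n : ℕ, 1 ≤ n →
          ∀ h : ℕ → ℕ → ℝ, (∀ j, h j 0 = 0) →
            variancen lam n (fun s => ∑ j : Fin n, h ((j : ℕ) + 1) (s j)) ≤
              C * ∑ p ∈ (Icc 1 n ×ˢ Icc 1 n).filter (fun p : ℕ × ℕ => p.1 * p.2 ≤ n),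
                  lam p.1 ^ p.2 * (h p.1 p.2) ^ 2 / (p.2 ! : ℝ) *
                    (Qj lam p.1 (n - p.1 * p.2) / Qfun lam n) := by
  refine ⟨varianceConst Θ θ', varianceConst_pos Θ θ', fun ρ hρ lam hlam hmul hQ n hn h h0 => ?_⟩
  have hw := isLogarithmicWeight_tilt hρ.le hθ' hlam hmul hQ
  rw [← expectn_sum_sq lam n h0, ← variancen_tilt lam hρ.ne', ← expectn_tilt lam hρ.ne']
  exact hw.variancen_le hn fun j : Fin n => h0 ((j : ℕ) + 1)

/-- Theorem 1: for a weakly logarithmic class of assemblies (with constants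
`ρ, Θ, θ, θ′ > 0`, `n₀ ≥ 1`) there is a constant `C > 0` such that for every `n ≥ 1`
and every additive function `h(s̄) = ∑_{j=1}^n h_j(s_j)` (with `h_j(0) = 0`),
`V_n h ≤ C · ∑_{jk ≤ n} (λ_j^k h_j(k)² / k!) · Q^{{j}}(n−jk)/Q(n)`. -/
theorem variance_additive_weakly_logarithmic
    (ρ Θ θ θ' : ℝ) (n₀ : ℕ) (hρ : 0 < ρ) (hΘ : 0 < Θ) (hθ : 0 < θ) (hθ' : 0 < θ')
    (hn₀ : 1 ≤ n₀) :
    ∃ C : ℝ, 0 < C ∧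
      ∀ lam : ℕ → ℝ,
        (∀ j, 1 ≤ j → 0 ≤ lam j) →
        (∀ j, 1 ≤ j → ρ ^ j * j * lam j ≤ Θ) →
        (∀ n, n₀ ≤ n → θ * n ≤ ∑ j ∈ Finset.Icc 1 n, ρ ^ j * j * lam j) →
        (∀ n : ℕ, 1 ≤ n →
          θ' * Real.exp (∑ j ∈ Finset.Icc 1 n, lam j * ρ ^ j) ≤ n * Qfun lam n * ρ ^ n) →
        ∀ n : ℕ, 1 ≤ n →
          ∀ h : ℕ → ℕ → ℝ, (∀ j, h j 0 = 0) →
            variancen lam n (fun s => ∑ j : Fin n, h ((j : ℕ) + 1) (s j)) ≤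
              C * ∑ p ∈ (Finset.Icc 1 n ×ˢ Finset.Icc 1 n).filter
                    (fun p : ℕ × ℕ => p.1 * p.2 ≤ n),
                  lam p.1 ^ p.2 * (h p.1 p.2) ^ 2 / (p.2 ! : ℝ) *
                    (Qj lam p.1 (n - p.1 * p.2) / Qfun lam n) := by
  obtain ⟨C, hC, hbound⟩ := variance_additive_weakly_logarithmic_general Θ θ' hθ'
  exact ⟨C, hC, fun lam hlam hmul _ hQ => hbound ρ hρ lam hlam hmul hQ⟩
end

section
/- Let ρ, Θ, θ, θ′ > 0 and n_0 ≥ 1 be constants. Then there exists a constant C > 0, depending only on ρ, Θ, θ, θ′ and n_0, with the following property. Let (λ_j)_{j≥1} be a sequence of nonnegative reals that is weakly logarithmic with these constants, i.e. (i) ρ^j · j · λ_j ≤ Θ for all j ≥ 1; (ii) ∑_{j≤n} ρ^j · j · λ_j ≥ θ·n for all n ≥ n_0; (iii) n·Q(n)·ρ^n ≥ θ′·exp{∑_{j≤n} λ_j ρ^j} for all n ≥ 1, where Q(n) := ∑_{ℓ(s̄)=n} ∏_{j≤n} λ_j^{s_j}/s_j!. Let n ≥ 1, let a_1, …, a_n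 be arbitrary real numbers, and define the completely additive function h(s̄) := ∑_{j=1}^n a_j · s_j on the set Ω_n := { s̄ ∈ ℕ_0^n : ℓ(s̄) = n }, endowed with the probability measure P_n(s̄) := (1/Q(n)) ∏_{j≤n} λ_j^{s_j}/s_j!. Then the variance of h under P_n satisfies V_n h := E_n h² − (E_n h)² ≤ C · ∑_{j=1}^{n} λ_j a_j² · Q(n − j) / Q(n), where Q(0) := 1. -/
open Nat Finset

/-!
Replacing `λ_j` by `λ_j ρ^j` leaves `P_n` unchanged, so let `ρ = 1`. Then `P_n` is the law of
independent Poisson counts of means `λ_j`, `j ≤ n`, conditioned on `ℓ = n`. Since `ℓ = n` on `Ω_n`,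
removing one component of size `j` gives

`n Q(n) E_n f = ∑_j j λ_j ∑_{ℓ(t) = n - j} w(t) f(t + e_j)`,

where `w` is the weight of a vector and `e_j` a unit vector. As `j λ_j ≤ Θ` and the layers
`ℓ = n - j` are disjoint, the right-hand side for `f = (h - c)²`, with `c` the Poisson mean of `h`,
is at most `2 Θ e^L ∑ λ_j a_j²`, where `L = ∑ λ_j`, up to a term already of the desired form. The
lower bound for `n Q(n)` absorbs `e^L`, and `Q(n)` is at most a constant times `Q(n - j)` when
`j ≤ n / 2`. This settles an `h` that only counts components of size at most `n / 2`; a vector in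
`Ω_n` has at most one larger component, so the rest of `h` satisfies `h(s)² ≤ ∑ a_j² s_j`.
-/

/-- The completely additive function `h(s̄) = ∑ a_j s_j`. -/
def additiveFn {ι : Type*} [Fintype ι] (a : ι → ℝ) (s : ι → ℕ) : ℝ := ∑ i, a i * (s i : ℝ)

section Poisson

open MeasureTheory ProbabilityTheory
open scoped NNReal

lemma poissonWeight_succ_mul (r : ℝ≥0) (k : ℕ) :
    Real.exp (-r) * r ^ (k + 1) / ((k + 1)! : ℝ) * ((k + 1 : ℕ) : ℝ) =
      r * (Real.exp (-r) * r ^ k / (k ! : ℝ)) := by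
  rw [Nat.factorial_succ, Nat.cast_mul]
  have hk : (k ! : ℝ) ≠ 0 := by positivity
  field_simp
  ring

lemma integrable_natCast_mul_poissonMeasure {r : ℝ≥0} {f : ℕ → ℝ}
    (hf : Integrable (fun k => f (k + 1)) (poissonMeasure r)) :
    Integrable (fun k : ℕ => (k : ℝ) * f k) (poissonMeasure r) := by
  rw [integrable_poissonMeasure_iff] at hf ⊢
  rw [← summable_nat_add_iff 1]
  refine (hf.mul_left (r : ℝ)).congr fun k => ?_
  rw [norm_mul, Real.norm_natCast, ← mul_assoc, ← mul_assoc, poissonWeight_succ_mul]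

lemma integral_natCast_mul_poissonMeasure {r : ℝ≥0} {f : ℕ → ℝ}
    (hf : Integrable (fun k => f (k + 1)) (poissonMeasure r)) :
    ∫ k : ℕ, (k : ℝ) * f k ∂poissonMeasure r = r * ∫ k, f (k + 1) ∂poissonMeasure r := by
  have hsum := hasSum_integral_poissonMeasure (integrable_natCast_mul_poissonMeasure hf)
  rw [← hasSum_nat_add_iff' 1] at hsum
  have hshift := (hasSum_integral_poissonMeasure hf).mul_left (r : ℝ)
  simp only [smul_eq_mul, ← mul_assoc, poissonWeight_succ_mul, Finset.sum_range_one, Nat.cast_zero,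
    mul_zero, zero_mul, sub_zero] at hsum hshift
  exact hsum.unique hshift

lemma integrable_natCast_poissonMeasure (r : ℝ≥0) :
    Integrable (fun k : ℕ => (k : ℝ)) (poissonMeasure r) := by
  simpa only [mul_one] using
    integrable_natCast_mul_poissonMeasure (f := fun _ => 1) (integrable_const (1 : ℝ))

lemma integral_natCast_poissonMeasure (r : ℝ≥0) :
    ∫ k : ℕ, (k : ℝ) ∂poissonMeasure r = r := by
  simpa using integral_natCast_mul_poissonMeasure (r := r) (f := fun _ => 1) (integrable_const 1)

lemma integrable_natCast_succ_poissonMeasure (r : ℝ≥0) :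
    Integrable (fun k : ℕ => ((k + 1 : ℕ) : ℝ)) (poissonMeasure r) := by
  simpa using (integrable_natCast_poissonMeasure r).add (integrable_const 1)

lemma memLp_natCast_poissonMeasure (r : ℝ≥0) :
    MemLp (fun k : ℕ => (k : ℝ)) 2 (poissonMeasure r) := by
  rw [memLp_two_iff_integrable_sq .of_discrete]
  simpa only [sq] using
    integrable_natCast_mul_poissonMeasure (integrable_natCast_succ_poissonMeasure r)

lemma variance_natCast_poissonMeasure (r : ℝ≥0) :
    Var[fun k : ℕ => (k : ℝ); poissonMeasure r] = r := by
  have hsq : ∫ k : ℕ, (k : ℝ) ^ 2 ∂poissonMeasure r = r * (r + 1) := by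
    simp only [sq]
    rw [integral_natCast_mul_poissonMeasure (integrable_natCast_succ_poissonMeasure r)]
    simp [integral_add (integrable_natCast_poissonMeasure r) (integrable_const 1),
      integral_natCast_poissonMeasure]
  rw [variance_eq_sub (memLp_natCast_poissonMeasure r)]
  simp only [Pi.pow_apply, hsq, integral_natCast_poissonMeasure]
  ring

variable {ι : Type*} [Fintype ι]

/-- The law of independent Poisson counts of means `r i`. -/
noncomputable def poissonPi (r : ι → ℝ≥0) : Measure (ι → ℕ) :=
  Measure.pi fun i => poissonMeasure (r i)

instance (r : ι → ℝ≥0) : IsProbabilityMeasure (poissonPi r) := by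
  unfold poissonPi; infer_instance

lemma poissonPi_real_singleton (r : ι → ℝ≥0) (t : ι → ℕ) :
    (poissonPi r).real {t} = Real.exp (-∑ i, (r i : ℝ)) * ∏ i, (r i : ℝ) ^ t i / ((t i)! : ℝ) := by
  rw [poissonPi, measureReal_def, Measure.pi_singleton, ENNReal.toReal_prod,
    ← Finset.sum_neg_distrib, Real.exp_sum, ← Finset.prod_mul_distrib]
  simp only [← measureReal_def, poissonMeasure_real_singleton, mul_div_assoc]

lemma memLp_mul_eval_poissonPi (r : ι → ℝ≥0) (a : ι → ℝ) (i : ι) :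
    MemLp (fun t : ι → ℕ => a i * (t i : ℝ)) 2 (poissonPi r) :=
  ((memLp_natCast_poissonMeasure (r i)).const_mul (a i)).comp_measurePreserving
    (measurePreserving_eval _ i)

lemma memLp_additiveFn_poissonPi (r : ι → ℝ≥0) (a : ι → ℝ) :
    MemLp (additiveFn a) 2 (poissonPi r) :=
  memLp_finsetSum _ fun i _ => memLp_mul_eval_poissonPi r a i

lemma integral_additiveFn_poissonPi (r : ι → ℝ≥0) (a : ι → ℝ) :
    ∫ t, additiveFn a t ∂poissonPi r = ∑ i, a i * r i := by
  simp only [additiveFn]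
  rw [integral_finsetSum _ fun i _ => (memLp_mul_eval_poissonPi r a i).integrable one_le_two]
  refine Finset.sum_congr rfl fun i _ => ?_
  rw [integral_const_mul, poissonPi,
    integral_comp_eval (μ := fun i => poissonMeasure (r i)) (f := fun k : ℕ => (k : ℝ))
      .of_discrete, integral_natCast_poissonMeasure]

lemma variance_additiveFn_poissonPi (r : ι → ℝ≥0) (a : ι → ℝ) :
    Var[additiveFn a; poissonPi r] = ∑ i, r i * a i ^ 2 := by
  have h := variance_sum_pi (μ := fun i => poissonMeasure (r i))
    (X := fun i (k : ℕ) => a i * (k : ℝ)) fun i => (memLp_natCast_poissonMeasure _).const_mul _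
  simp only [variance_const_mul, variance_natCast_poissonMeasure] at h
  simp only [mul_comm (r _ : ℝ), ← h, poissonPi, Finset.sum_fn]
  rfl

lemma integrable_sq_additiveFn_sub_poissonPi (r : ι → ℝ≥0) (a : ι → ℝ) (c : ℝ) :
    Integrable (fun t : ι → ℕ => (additiveFn a t - c) ^ 2) (poissonPi r) :=
  ((memLp_additiveFn_poissonPi r a).sub (memLp_const c)).integrable_sq

lemma integral_sq_additiveFn_sub_mean_poissonPi (r : ι → ℝ≥0) (a : ι → ℝ) :
    ∫ t, (additiveFn a t - ∑ i, a i * r i) ^ 2 ∂poissonPi r = ∑ i, r i * a i ^ 2 := by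
  rw [← variance_additiveFn_poissonPi, variance_eq_integral .of_discrete,
    integral_additiveFn_poissonPi]

lemma sum_prod_pow_div_factorial_mul_le (r : ι → ℝ≥0) (T : Finset (ι → ℕ)) {F : (ι → ℕ) → ℝ}
    (hF : 0 ≤ F) (hint : Integrable F (poissonPi r)) :
    ∑ t ∈ T, (∏ i, (r i : ℝ) ^ t i / ((t i)! : ℝ)) * F t ≤
      Real.exp (∑ i, (r i : ℝ)) * ∫ t, F t ∂poissonPi r := by
  have hle : ∑ t ∈ T, (poissonPi r).real {t} • F t ≤ ∫ t, F t ∂poissonPi r := by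
    rw [← setIntegral_finset T hint.integrableOn]
    exact setIntegral_le_integral hint (.of_forall hF)
  calc ∑ t ∈ T, (∏ i, (r i : ℝ) ^ t i / ((t i)! : ℝ)) * F t
      = Real.exp (∑ i, (r i : ℝ)) * ∑ t ∈ T, (poissonPi r).real {t} • F t := by
        simp only [poissonPi_real_singleton, Real.exp_neg, smul_eq_mul, Finset.mul_sum, mul_assoc,
          mul_inv_cancel_left₀ (Real.exp_ne_zero _)]
    _ ≤ _ := by gcongr

end Poisson

section Layers

variable {n : ℕ}

/-- The size `ℓ(s̄)` of a component-size vector. -/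
def totalSize (s : Fin n → ℕ) : ℕ := ∑ j : Fin n, ((j : ℕ) + 1) * s j

/-- The vectors of length `n` and size `m`, so that `sizeLayer n n` is `OmegaSet n`; a length `n`
independent of `m` puts the summation ranges of all `Q(m)` with `m ≤ n` in one space. -/
def sizeLayer (n m : ℕ) : Finset (Fin n → ℕ) :=
  (Fintype.piFinset fun _ => Finset.range (m + 1)).filter fun s => totalSize s = m

/-- The unnormalised expectation of `f` over the vectors of length `n` and size `m`. -/
noncomputable def layerSum (lam : ℕ → ℝ) (n m : ℕ) (f : (Fin n → ℕ) → ℝ) : ℝ :=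
  ∑ s ∈ sizeLayer n m, wt lam n s * f s

lemma mul_apply_le_totalSize (s : Fin n → ℕ) (j : Fin n) : ((j : ℕ) + 1) * s j ≤ totalSize s :=
  Finset.single_le_sum (f := fun j : Fin n => ((j : ℕ) + 1) * s j)
    (fun _ _ => Nat.zero_le _) (Finset.mem_univ j)

lemma mem_sizeLayer {m : ℕ} {s : Fin n → ℕ} : s ∈ sizeLayer n m ↔ totalSize s = m := by
  simp only [sizeLayer, Finset.mem_filter, Fintype.mem_piFinset, Finset.mem_range,
    and_iff_right_iff_imp, Order.lt_add_one_iff]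
  rintro rfl j
  exact (Nat.le_mul_of_pos_left _ j.val.succ_pos).trans (mul_apply_le_totalSize s j)

lemma omegaSet_eq_sizeLayer (n : ℕ) : OmegaSet n = sizeLayer n n := rfl

lemma totalSize_add_single (s : Fin n → ℕ) (j : Fin n) :
    totalSize (s + Pi.single j 1) = totalSize s + (j + 1) := by
  simp [totalSize, mul_add, Finset.sum_add_distrib, Pi.single_apply]

lemma wt_nonneg {lam : ℕ → ℝ} (hlam : ∀ j, 1 ≤ j → 0 ≤ lam j) (s : Fin n → ℕ) :
    0 ≤ wt lam n s :=
  Finset.prod_nonneg fun j _ =>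
    div_nonneg (pow_nonneg (hlam _ j.val.succ_pos) _) (Nat.cast_nonneg _)

lemma wt_add_single (lam : ℕ → ℝ) (s : Fin n → ℕ) (j : Fin n) :
    wt lam n (s + Pi.single j 1) * (s j + 1 : ℕ) = lam (j + 1) * wt lam n s := by
  have hfactor : lam (j + 1) ^ (s j + 1) / ((s j + 1)! : ℝ) * (s j + 1 : ℕ) =
      lam (j + 1) * (lam (j + 1) ^ s j / ((s j)! : ℝ)) := by
    have : ((s j)! : ℝ) ≠ 0 := by positivity
    rw [Nat.factorial_succ, Nat.cast_mul]
    field_simp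
    ring
  have hrest (i : Fin n) (hi : i ∈ ({j}ᶜ : Finset (Fin n))) :
      (s + Pi.single j 1 : Fin n → ℕ) i = s i := by
    simp [Finset.notMem_singleton.mp (Finset.mem_compl.mp hi)]
  rw [wt, wt, Fintype.prod_eq_mul_prod_compl j, Fintype.prod_eq_mul_prod_compl j,
    Finset.prod_congr rfl fun i hi => by rw [hrest i hi], mul_right_comm, Pi.add_apply,
    Pi.single_eq_same, hfactor, mul_assoc]

lemma layerSum_apply_mul (lam : ℕ → ℝ) (m : ℕ) (j : Fin n) (f : (Fin n → ℕ) → ℝ) :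
    layerSum lam n (m + (j + 1)) (fun s => (s j : ℝ) * f s) =
      lam (j + 1) * layerSum lam n m (fun t => f (t + Pi.single j 1)) := by
  rw [layerSum, layerSum, Finset.mul_sum]
  symm
  refine Finset.sum_of_injOn (· + Pi.single j 1) (add_left_injective _).injOn ?maps ?vanish ?terms
  case maps =>
    intro t ht
    rw [Finset.mem_coe, mem_sizeLayer] at ht ⊢
    rw [totalSize_add_single, ht]
  case vanish =>
    intro s hs hne
    suffices s j = 0 by simp [this]
    by_contra hsj
    have hcancel : s - Pi.single j 1 + Pi.single j 1 = s :=
      tsub_add_cancel_of_le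
        (update_le_iff.mpr ⟨Nat.one_le_iff_ne_zero.mpr hsj, fun _ _ => Nat.zero_le _⟩)
    refine hne ⟨s - Pi.single j 1, ?_, hcancel⟩
    rw [Finset.mem_coe, mem_sizeLayer]
    rw [mem_sizeLayer, ← hcancel, totalSize_add_single] at hs
    exact Nat.add_right_cancel hs
  case terms =>
    intro t _
    rw [← mul_assoc, ← mul_assoc, Pi.add_apply, Pi.single_eq_same, wt_add_single]

lemma layerSum_additiveFn_mul (lam : ℕ → ℝ) (c : Fin n → ℝ) (f : (Fin n → ℕ) → ℝ) :
    layerSum lam n n (fun s => additiveFn c s * f s) =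
      ∑ j, c j * (lam (j + 1) * layerSum lam n (n - (j + 1)) fun t => f (t + Pi.single j 1)) := by
  simp only [← layerSum_apply_mul, Nat.sub_add_cancel (Fin.is_lt _)]
  simp only [layerSum, additiveFn, Finset.mul_sum, Finset.sum_mul]
  rw [Finset.sum_comm]
  exact Finset.sum_congr rfl fun j _ => Finset.sum_congr rfl fun s _ => by ring

lemma natCast_mul_layerSum (lam : ℕ → ℝ) (f : (Fin n → ℕ) → ℝ) :
    n * layerSum lam n n f = ∑ j : Fin n, ((j + 1 : ℕ) : ℝ) *
      (lam (j + 1) * layerSum lam n (n - (j + 1)) fun t => f (t + Pi.single j 1)) := by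
  rw [← layerSum_additiveFn_mul, layerSum, layerSum, Finset.mul_sum]
  refine Finset.sum_congr rfl fun s hs => ?_
  have hsize : additiveFn (fun j : Fin n => ((j + 1 : ℕ) : ℝ)) s = n := by
    have hcast : ((totalSize s : ℕ) : ℝ) = n := congrArg _ (mem_sizeLayer.mp hs)
    rw [← hcast, totalSize, additiveFn]
    push_cast
    rfl
  rw [hsize]
  ring

lemma additiveFn_add_single (a : Fin n → ℝ) (s : Fin n → ℕ) (j : Fin n) :
    additiveFn a (s + Pi.single j 1) = additiveFn a s + a j := by
  simp [additiveFn, mul_add, Finset.sum_add_distrib, Pi.single_apply]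

lemma layerSum_mono {lam : ℕ → ℝ} (hlam : ∀ j, 1 ≤ j → 0 ≤ lam j) {m : ℕ}
    {f g : (Fin n → ℕ) → ℝ} (hfg : ∀ s ∈ sizeLayer n m, f s ≤ g s) :
    layerSum lam n m f ≤ layerSum lam n m g :=
  Finset.sum_le_sum fun s hs => mul_le_mul_of_nonneg_left (hfg s hs) (wt_nonneg hlam s)

lemma layerSum_nonneg {lam : ℕ → ℝ} (hlam : ∀ j, 1 ≤ j → 0 ≤ lam j) {m : ℕ}
    {f : (Fin n → ℕ) → ℝ} (hf : 0 ≤ f) : 0 ≤ layerSum lam n m f :=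
  Finset.sum_nonneg fun s _ => mul_nonneg (wt_nonneg hlam s) (hf s)

lemma layerSum_add_sq_le {lam : ℕ → ℝ} (hlam : ∀ j, 1 ≤ j → 0 ≤ lam j) (m : ℕ)
    (f g : (Fin n → ℕ) → ℝ) :
    layerSum lam n m (fun s => (f s + g s) ^ 2) ≤
      2 * layerSum lam n m (fun s => f s ^ 2) + 2 * layerSum lam n m fun s => g s ^ 2 := by
  refine (layerSum_mono hlam fun s _ => add_sq_le).trans_eq ?_
  simp only [layerSum, Finset.mul_sum, ← Finset.sum_add_distrib]
  exact Finset.sum_congr rfl fun s _ => by ring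

lemma totalSize_append_zero {m k : ℕ} (s : Fin m → ℕ) :
    totalSize (Fin.append s (0 : Fin k → ℕ)) = totalSize s := by
  simp [totalSize, Fin.sum_univ_add]

lemma wt_append_zero (lam : ℕ → ℝ) {m k : ℕ} (s : Fin m → ℕ) :
    wt lam (m + k) (Fin.append s (0 : Fin k → ℕ)) = wt lam m s := by
  simp [wt, Fin.prod_univ_add]

lemma append_castAdd_zero {m k : ℕ} {t : Fin (m + k) → ℕ} (ht : totalSize t ≤ m) :
    Fin.append (fun i => t (Fin.castAdd k i)) (0 : Fin k → ℕ) = t := by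
  have hzero (i : Fin k) : t (Fin.natAdd m i) = 0 := by
    by_contra hi
    have hle := (mul_apply_le_totalSize t (Fin.natAdd m i)).trans ht
    have hge := Nat.le_mul_of_pos_right (m + (i : ℕ) + 1) (Nat.pos_of_ne_zero hi)
    rw [Fin.val_natAdd] at hle
    lia
  calc Fin.append (fun i => t (Fin.castAdd k i)) (0 : Fin k → ℕ)
      = Fin.append (fun i => t (Fin.castAdd k i)) fun i => t (Fin.natAdd m i) := by
        simp only [hzero]; rfl
    _ = t := Fin.append_castAdd_natAdd

lemma layerSum_one {lam : ℕ → ℝ} {m : ℕ} (hmn : m ≤ n) :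
    layerSum lam n m (fun _ => 1) = Qfun lam m := by
  obtain ⟨k, rfl⟩ := Nat.exists_eq_add_of_le hmn
  simp only [layerSum, mul_one, Qfun, omegaSet_eq_sizeLayer]
  symm
  refine Finset.sum_nbij' (fun s => Fin.append s (0 : Fin k → ℕ))
    (fun t i => t (Fin.castAdd k i)) ?_ ?_ ?_ ?_ ?_
  · intro s hs
    rw [mem_sizeLayer] at hs ⊢
    rw [totalSize_append_zero, hs]
  · intro t ht
    rw [mem_sizeLayer] at ht ⊢
    rw [← totalSize_append_zero (k := k), append_castAdd_zero ht.le, ht]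
  · intro s _
    simp only [Fin.append_left]
  · exact fun t ht => append_castAdd_zero (mem_sizeLayer.mp ht).le
  · exact fun s _ => (wt_append_zero lam s).symm

lemma layerSum_const (lam : ℕ → ℝ) {m : ℕ} (hmn : m ≤ n) (c : ℝ) :
    layerSum lam n m (fun _ => c) = Qfun lam m * c := by
  rw [← layerSum_one hmn, layerSum, layerSum, Finset.sum_mul]
  simp only [mul_one]

lemma layerSum_additiveFn (lam : ℕ → ℝ) (c : Fin n → ℝ) :
    layerSum lam n n (additiveFn c) = ∑ j, c j * (lam (j + 1) * Qfun lam (n - (j + 1))) := by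
  have h := layerSum_additiveFn_mul lam c fun _ => 1
  simpa only [mul_one, layerSum_one (Nat.sub_le _ _)] using h

lemma Qfun_nonneg {lam : ℕ → ℝ} (hlam : ∀ j, 1 ≤ j → 0 ≤ lam j) (m : ℕ) : 0 ≤ Qfun lam m :=
  Finset.sum_nonneg fun s _ => wt_nonneg hlam s

lemma expectn_eq_layerSum_div (lam : ℕ → ℝ) (f : (Fin n → ℕ) → ℝ) :
    expectn lam n f = layerSum lam n n f / Qfun lam n := rfl

end Layers

section Moments

open MeasureTheory ProbabilityTheory
open scoped NNReal

variable {lam : ℕ → ℝ} {n : ℕ} {Θ θ' : ℝ}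

lemma sum_Icc_one_eq_sum_fin (n : ℕ) (f : ℕ → ℝ) :
    ∑ j ∈ Finset.Icc 1 n, f j = ∑ j : Fin n, f (j + 1) := by
  rw [Fin.sum_univ_eq_sum_range (fun i => f (i + 1)) n, Finset.range_eq_Ico,
    Finset.sum_Ico_add' f 0 n 1]
  rfl

lemma pairwiseDisjoint_sizeLayer (n : ℕ) :
    (Set.univ : Set (Fin n)).PairwiseDisjoint fun j => sizeLayer n (n - (j + 1)) := by
  intro i _ j _ hij
  refine Finset.disjoint_left.mpr fun t hi hj => hij (Fin.ext ?_)
  rw [mem_sizeLayer] at hi hj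
  lia

/-- The Poisson rates `λ_1, …, λ_n`; negative values are replaced by `0`. -/
noncomputable def poissonRate (lam : ℕ → ℝ) (n : ℕ) (j : Fin n) : ℝ≥0 := (lam (j + 1)).toNNReal

lemma coe_poissonRate (hlam : ∀ j, 1 ≤ j → 0 ≤ lam j) (j : Fin n) :
    (poissonRate lam n j : ℝ) = lam (j + 1) :=
  Real.coe_toNNReal _ (hlam _ j.val.succ_pos)

lemma sum_layerSum_le (hlam : ∀ j, 1 ≤ j → 0 ≤ lam j) {F : (Fin n → ℕ) → ℝ} (hF : 0 ≤ F)
    (hint : Integrable F (poissonPi (poissonRate lam n))) :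
    ∑ j : Fin n, layerSum lam n (n - (j + 1)) F ≤
      Real.exp (∑ j ∈ Finset.Icc 1 n, lam j) * ∫ t, F t ∂poissonPi (poissonRate lam n) := by
  have h := sum_prod_pow_div_factorial_mul_le (poissonRate lam n)
    (Finset.univ.biUnion fun j : Fin n => sizeLayer n (n - (j + 1))) hF hint
  simp only [coe_poissonRate hlam] at h
  rwa [Finset.sum_biUnion (by simpa using pairwiseDisjoint_sizeLayer n),
    ← sum_Icc_one_eq_sum_fin] at h

-- `j λ_j ≤ Θ` makes the weighted sum over the layers `ℓ = n - j` comparable with the plain one,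
-- and these disjoint layers together carry at most the whole Poisson mass.
lemma sum_mul_layerSum_le (hlam : ∀ j, 1 ≤ j → 0 ≤ lam j) (hΘ : 0 ≤ Θ)
    (hle : ∀ j : ℕ, 1 ≤ j → j * lam j ≤ Θ) {F : (Fin n → ℕ) → ℝ} (hF : 0 ≤ F)
    (hint : Integrable F (poissonPi (poissonRate lam n))) :
    ∑ j : Fin n, ((j + 1 : ℕ) : ℝ) * (lam (j + 1) * layerSum lam n (n - (j + 1)) F) ≤
      Θ * (Real.exp (∑ j ∈ Finset.Icc 1 n, lam j) *
        ∫ t, F t ∂poissonPi (poissonRate lam n)) :=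
  calc ∑ j : Fin n, ((j + 1 : ℕ) : ℝ) * (lam (j + 1) * layerSum lam n (n - (j + 1)) F)
      ≤ ∑ j : Fin n, Θ * layerSum lam n (n - (j + 1)) F := by
        refine Finset.sum_le_sum fun j _ => ?_
        rw [← mul_assoc]
        exact mul_le_mul_of_nonneg_right (hle _ j.val.succ_pos) (layerSum_nonneg hlam hF)
    _ ≤ _ := by
        rw [← Finset.mul_sum]
        exact mul_le_mul_of_nonneg_left (sum_layerSum_le hlam hF hint) hΘ

lemma natCast_mul_Qfun_le (hlam : ∀ j, 1 ≤ j → 0 ≤ lam j) (hΘ : 0 ≤ Θ)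
    (hle : ∀ j : ℕ, 1 ≤ j → j * lam j ≤ Θ) (n : ℕ) :
    n * Qfun lam n ≤ Θ * Real.exp (∑ j ∈ Finset.Icc 1 n, lam j) := by
  rw [← layerSum_one le_rfl, natCast_mul_layerSum]
  simpa using sum_mul_layerSum_le (n := n) hlam hΘ hle (F := fun _ => 1) (fun _ => zero_le_one)
    (integrable_const 1)

lemma sum_mul_layerSum_const_le (hlam : ∀ j, 1 ≤ j → 0 ≤ lam j) {c : Fin n → ℝ} (hc : 0 ≤ c) :
    ∑ j : Fin n, ((j + 1 : ℕ) : ℝ) * (lam (j + 1) * layerSum lam n (n - (j + 1)) fun _ => c j) ≤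
      n * layerSum lam n n (additiveFn c) := by
  rw [layerSum_additiveFn, Finset.mul_sum]
  refine Finset.sum_le_sum fun j _ => ?_
  rw [layerSum_const lam (Nat.sub_le _ _)]
  have hterm : 0 ≤ c j * (lam (j + 1) * Qfun lam (n - (j + 1))) :=
    mul_nonneg (hc j) (mul_nonneg (hlam _ j.val.succ_pos) (Qfun_nonneg hlam _))
  calc ((j + 1 : ℕ) : ℝ) * (lam (j + 1) * (Qfun lam (n - (j + 1)) * c j))
      = ((j + 1 : ℕ) : ℝ) * (c j * (lam (j + 1) * Qfun lam (n - (j + 1)))) := by ring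
    _ ≤ _ := mul_le_mul_of_nonneg_right (Nat.cast_le.mpr j.isLt) hterm

/-- The mean `∑ a_j λ_j` of an additive function of independent Poisson counts of means `λ_j`. -/
def poissonMean (lam : ℕ → ℝ) (a : Fin n → ℝ) : ℝ := ∑ j, a j * lam (j + 1)

lemma integral_sq_sub_poissonMean (hlam : ∀ j, 1 ≤ j → 0 ≤ lam j) (a : Fin n → ℝ) :
    ∫ t, (additiveFn a t - poissonMean lam a) ^ 2 ∂poissonPi (poissonRate lam n) =
      ∑ j : Fin n, lam (j + 1) * a j ^ 2 := by
  simpa only [coe_poissonRate hlam, poissonMean] using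
    integral_sq_additiveFn_sub_mean_poissonPi (poissonRate lam n) a

lemma natCast_mul_layerSum_sq_sub_le (hlam : ∀ j, 1 ≤ j → 0 ≤ lam j) (hΘ : 0 ≤ Θ)
    (hle : ∀ j : ℕ, 1 ≤ j → j * lam j ≤ Θ) (b : Fin n → ℝ) :
    n * layerSum lam n n (fun s => (additiveFn b s - poissonMean lam b) ^ 2) ≤
      2 * (Θ * (Real.exp (∑ j ∈ Finset.Icc 1 n, lam j) * ∑ j : Fin n, lam (j + 1) * b j ^ 2)) +
        2 * (n * layerSum lam n n (additiveFn (b ^ 2))) := by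
  set X : (Fin n → ℕ) → ℝ := fun t => additiveFn b t - poissonMean lam b with hX
  have hshift (t : Fin n → ℕ) (j : Fin n) : X (t + Pi.single j 1) = X t + b j := by
    simp only [hX, additiveFn_add_single]
    ring
  rw [natCast_mul_layerSum]
  calc ∑ j : Fin n, ((j + 1 : ℕ) : ℝ) *
        (lam (j + 1) * layerSum lam n (n - (j + 1)) fun t => X (t + Pi.single j 1) ^ 2)
      ≤ ∑ j : Fin n, ((j + 1 : ℕ) : ℝ) * (lam (j + 1) *
          (2 * layerSum lam n (n - (j + 1)) (fun t => X t ^ 2) +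
            2 * layerSum lam n (n - (j + 1)) fun _ => b j ^ 2)) := by
        simp only [hshift]
        gcongr with j
        · exact hlam _ j.val.succ_pos
        · exact layerSum_add_sq_le hlam _ X fun _ => b j
    _ = 2 * ∑ j : Fin n, ((j + 1 : ℕ) : ℝ) *
            (lam (j + 1) * layerSum lam n (n - (j + 1)) fun t => X t ^ 2) +
          2 * ∑ j : Fin n, ((j + 1 : ℕ) : ℝ) *
            (lam (j + 1) * layerSum lam n (n - (j + 1)) fun _ => b j ^ 2) := by
        rw [Finset.mul_sum, Finset.mul_sum, ← Finset.sum_add_distrib]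
        exact Finset.sum_congr rfl fun j _ => by ring
    _ ≤ _ := by
        rw [← integral_sq_sub_poissonMean hlam b]
        gcongr
        · exact sum_mul_layerSum_le hlam hΘ hle (fun t => sq_nonneg (X t))
            (integrable_sq_additiveFn_sub_poissonPi _ b _)
        · exact sum_mul_layerSum_const_le hlam fun j => sq_nonneg (b j)

lemma sum_Icc_add_le (hle : ∀ j : ℕ, 1 ≤ j → j * lam j ≤ Θ) (hΘ : 0 ≤ Θ) {m j : ℕ} (hm : 1 ≤ m)
    (hjm : j ≤ m) :
    ∑ i ∈ Finset.Icc 1 (m + j), lam i ≤ ∑ i ∈ Finset.Icc 1 m, lam i + Θ := by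
  have hm' : (0 : ℝ) < m := by exact_mod_cast hm
  have htail : ∑ i ∈ Finset.Ioc m (m + j), lam i ≤ Θ :=
    calc ∑ i ∈ Finset.Ioc m (m + j), lam i ≤ (Finset.Ioc m (m + j)).card • (Θ / m) := by
          refine Finset.sum_le_card_nsmul _ _ _ fun i hi => ?_
          have hmi : m < i := (Finset.mem_Ioc.mp hi).1
          have hi' : (0 : ℝ) < i := by exact_mod_cast hm.trans hmi.le
          calc lam i ≤ Θ / i := (le_div_iff₀' hi').mpr (hle i (hm.trans hmi.le))
            _ ≤ Θ / m := by gcongr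
      _ = j * Θ / m := by rw [Nat.card_Ioc, Nat.add_sub_cancel_left, nsmul_eq_mul, mul_div_assoc]
      _ ≤ Θ := by
          rw [div_le_iff₀ hm', mul_comm Θ]
          gcongr
  have hsplit := Finset.sum_Ioc_consecutive lam (Nat.zero_le m) (Nat.le_add_right m j)
  change ∑ i ∈ Finset.Ioc 0 (m + j), lam i ≤ ∑ i ∈ Finset.Ioc 0 m, lam i + Θ
  linarith

lemma mul_Qfun_add_le (hlam : ∀ j, 1 ≤ j → 0 ≤ lam j) (hΘ : 0 ≤ Θ)
    (hle : ∀ j : ℕ, 1 ≤ j → j * lam j ≤ Θ) (hθ' : 0 ≤ θ')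
    (hQ : ∀ n : ℕ, 1 ≤ n → θ' * Real.exp (∑ j ∈ Finset.Icc 1 n, lam j) ≤ n * Qfun lam n)
    {m j : ℕ} (hm : 1 ≤ m) (hjm : j ≤ m) :
    θ' * Qfun lam (m + j) ≤ Θ * Real.exp Θ * Qfun lam m := by
  have hm' : (0 : ℝ) < m := by exact_mod_cast hm
  have hgrow : m * Qfun lam (m + j) ≤ (m + j : ℕ) * Qfun lam (m + j) :=
    mul_le_mul_of_nonneg_right (Nat.cast_le.mpr (Nat.le_add_right m j)) (Qfun_nonneg hlam _)
  refine le_of_mul_le_mul_left ?_ hm'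
  calc m * (θ' * Qfun lam (m + j)) = θ' * (m * Qfun lam (m + j)) := by ring
    _ ≤ θ' * (Θ * Real.exp (∑ i ∈ Finset.Icc 1 (m + j), lam i)) := by
        exact mul_le_mul_of_nonneg_left (hgrow.trans (natCast_mul_Qfun_le hlam hΘ hle _)) hθ'
    _ ≤ θ' * (Θ * Real.exp (∑ i ∈ Finset.Icc 1 m, lam i + Θ)) := by
        gcongr
        exact sum_Icc_add_le hle hΘ hm hjm
    _ = Θ * Real.exp Θ * (θ' * Real.exp (∑ i ∈ Finset.Icc 1 m, lam i)) := by
        rw [Real.exp_add]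
        ring
    _ ≤ Θ * Real.exp Θ * (m * Qfun lam m) := by
        exact mul_le_mul_of_nonneg_left (hQ m hm) (by positivity)
    _ = m * (Θ * Real.exp Θ * Qfun lam m) := by ring

lemma mul_Qfun_mul_sum_le_layerSum_additiveFn (hlam : ∀ j, 1 ≤ j → 0 ≤ lam j) (hΘ : 0 ≤ Θ)
    (hle : ∀ j : ℕ, 1 ≤ j → j * lam j ≤ Θ) (hθ' : 0 ≤ θ')
    (hQ : ∀ n : ℕ, 1 ≤ n → θ' * Real.exp (∑ j ∈ Finset.Icc 1 n, lam j) ≤ n * Qfun lam n)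
    {c : Fin n → ℝ} (hc : 0 ≤ c) (hsmall : ∀ j : Fin n, n < 2 * ((j : ℕ) + 1) → c j = 0) :
    θ' * Qfun lam n * ∑ j : Fin n, lam (j + 1) * c j ≤
      Θ * Real.exp Θ * layerSum lam n n (additiveFn c) := by
  rw [layerSum_additiveFn, Finset.mul_sum, Finset.mul_sum]
  refine Finset.sum_le_sum fun j _ => ?_
  rcases lt_or_ge n (2 * ((j : ℕ) + 1)) with hj | hj
  · simp [hsmall j hj]
  · have hratio := mul_Qfun_add_le hlam hΘ hle hθ' hQ (m := n - (j + 1)) (j := j + 1)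
      (by lia) (by lia)
    rw [Nat.sub_add_cancel j.isLt] at hratio
    calc θ' * Qfun lam n * (lam (j + 1) * c j)
        ≤ Θ * Real.exp Θ * Qfun lam (n - (j + 1)) * (lam (j + 1) * c j) :=
          mul_le_mul_of_nonneg_right hratio (mul_nonneg (hlam _ j.val.succ_pos) (hc j))
      _ = _ := by ring

lemma layerSum_sq_sub_le (hlam : ∀ j, 1 ≤ j → 0 ≤ lam j) (hΘ : 0 ≤ Θ)
    (hle : ∀ j : ℕ, 1 ≤ j → j * lam j ≤ Θ) (hθ' : 0 < θ')
    (hQ : ∀ n : ℕ, 1 ≤ n → θ' * Real.exp (∑ j ∈ Finset.Icc 1 n, lam j) ≤ n * Qfun lam n)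
    (hn : 1 ≤ n) {b : Fin n → ℝ} (hsmall : ∀ j : Fin n, n < 2 * ((j : ℕ) + 1) → b j = 0) :
    layerSum lam n n (fun s => (additiveFn b s - poissonMean lam b) ^ 2) ≤
      (2 * Θ ^ 2 * Real.exp Θ / θ' ^ 2 + 2) * layerSum lam n n (additiveFn (b ^ 2)) := by
  have hn' : (0 : ℝ) < n := by exact_mod_cast hn
  set T := layerSum lam n n (additiveFn (b ^ 2))
  set W := ∑ j : Fin n, lam (j + 1) * b j ^ 2
  have hW : 0 ≤ W :=
    Finset.sum_nonneg fun j _ => mul_nonneg (hlam _ j.val.succ_pos) (sq_nonneg _)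
  have hexp : Real.exp (∑ j ∈ Finset.Icc 1 n, lam j) ≤ n * Qfun lam n / θ' :=
    (le_div_iff₀' hθ').mpr (hQ n hn)
  have hQW : Qfun lam n * W ≤ Θ * Real.exp Θ * T / θ' := by
    rw [le_div_iff₀' hθ', ← mul_assoc]
    exact mul_Qfun_mul_sum_le_layerSum_additiveFn hlam hΘ hle hθ'.le hQ (fun j => sq_nonneg (b j))
      fun j hj => by simp [hsmall j hj]
  refine le_of_mul_le_mul_left ?_ hn'
  calc _ ≤ 2 * (Θ * (Real.exp (∑ j ∈ Finset.Icc 1 n, lam j) * W)) + 2 * (n * T) :=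
        natCast_mul_layerSum_sq_sub_le hlam hΘ hle b
    _ ≤ 2 * (Θ * (n * Qfun lam n / θ' * W)) + 2 * (n * T) := by gcongr
    _ = 2 * (Θ * n / θ' * (Qfun lam n * W)) + 2 * (n * T) := by ring
    _ ≤ 2 * (Θ * n / θ' * (Θ * Real.exp Θ * T / θ')) + 2 * (n * T) := by gcongr
    _ = n * ((2 * Θ ^ 2 * Real.exp Θ / θ' ^ 2 + 2) * T) := by ring

end Moments

section Splitting

variable {lam : ℕ → ℝ} {n : ℕ} {Θ θ' : ℝ}

lemma additiveFn_add {ι : Type*} [Fintype ι] (b c : ι → ℝ) (s : ι → ℕ) :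
    additiveFn (b + c) s = additiveFn b s + additiveFn c s := by
  simp only [additiveFn, Pi.add_apply, add_mul, Finset.sum_add_distrib]

lemma layerSum_additiveFn_add (lam : ℕ → ℝ) (m : ℕ) (b c : Fin n → ℝ) :
    layerSum lam n m (additiveFn (b + c)) =
      layerSum lam n m (additiveFn b) + layerSum lam n m (additiveFn c) := by
  simp only [layerSum, additiveFn_add, mul_add, Finset.sum_add_distrib]

lemma layerSum_additiveFn_nonneg (hlam : ∀ j, 1 ≤ j → 0 ≤ lam j) {m : ℕ} {c : Fin n → ℝ}
    (hc : 0 ≤ c) : 0 ≤ layerSum lam n m (additiveFn c) :=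
  layerSum_nonneg hlam fun _ => Finset.sum_nonneg fun j _ => mul_nonneg (hc j) (Nat.cast_nonneg _)

lemma sum_apply_le_one_of_large {s : Fin n → ℕ} (hs : totalSize s ≤ n) {B : Finset (Fin n)}
    (hB : ∀ j ∈ B, n < 2 * ((j : ℕ) + 1)) : ∑ j ∈ B, s j ≤ 1 := by
  have hlarge : (n + 1) * ∑ j ∈ B, s j ≤ 2 * n :=
    calc (n + 1) * ∑ j ∈ B, s j ≤ ∑ j ∈ B, 2 * (((j : ℕ) + 1) * s j) := by
          rw [Finset.mul_sum]
          refine Finset.sum_le_sum fun j hj => ?_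
          rw [← mul_assoc]
          exact Nat.mul_le_mul_right _ (hB j hj)
      _ ≤ 2 * totalSize s := by
          rw [← Finset.mul_sum]
          exact Nat.mul_le_mul_left _ (Finset.sum_le_sum_of_subset (Finset.subset_univ B))
      _ ≤ 2 * n := Nat.mul_le_mul_left _ hs
  by_contra! h
  have := Nat.mul_le_mul_left (n + 1) h
  lia

lemma sq_additiveFn_le_of_large {c : Fin n → ℝ}
    (hc : ∀ j : Fin n, 2 * ((j : ℕ) + 1) ≤ n → c j = 0) {s : Fin n → ℕ} (hs : totalSize s ≤ n) :
    additiveFn c s ^ 2 ≤ additiveFn (c ^ 2) s := by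
  set B : Finset (Fin n) := Finset.univ.filter fun j => n < 2 * ((j : ℕ) + 1)
  have hcard : ∑ j ∈ B, (s j : ℝ) ≤ 1 := by
    exact_mod_cast sum_apply_le_one_of_large hs fun j hj => (Finset.mem_filter.mp hj).2
  have hsupport : additiveFn c s = ∑ j ∈ B, c j * (s j : ℝ) :=
    (Finset.sum_filter_of_ne fun j _ hj => by
      by_contra! h
      exact hj (by rw [hc j h, zero_mul])).symm
  calc additiveFn c s ^ 2
      ≤ (∑ j ∈ B, c j ^ 2 * (s j : ℝ)) * ∑ j ∈ B, (s j : ℝ) := by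
        rw [hsupport]
        exact Finset.sum_sq_le_sum_mul_sum_of_sq_le_mul _ (fun j _ => by positivity)
          (fun j _ => by positivity) fun j _ => le_of_eq (by ring)
    _ ≤ ∑ j ∈ B, c j ^ 2 * (s j : ℝ) :=
        mul_le_of_le_one_right (Finset.sum_nonneg fun j _ => by positivity) hcard
    _ ≤ additiveFn (c ^ 2) s :=
        Finset.sum_le_sum_of_subset_of_nonneg (Finset.subset_univ B) fun j _ _ => by positivity

lemma layerSum_sq_additiveFn_le_of_large (hlam : ∀ j, 1 ≤ j → 0 ≤ lam j) {c : Fin n → ℝ}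
    (hc : ∀ j : Fin n, 2 * ((j : ℕ) + 1) ≤ n → c j = 0) :
    layerSum lam n n (fun s => additiveFn c s ^ 2) ≤ layerSum lam n n (additiveFn (c ^ 2)) :=
  layerSum_mono hlam fun _ hs => sq_additiveFn_le_of_large hc (mem_sizeLayer.mp hs).le

lemma exists_layerSum_sq_additiveFn_sub_le (hlam : ∀ j, 1 ≤ j → 0 ≤ lam j) (hΘ : 0 ≤ Θ)
    (hle : ∀ j : ℕ, 1 ≤ j → j * lam j ≤ Θ) (hθ' : 0 < θ')
    (hQ : ∀ n : ℕ, 1 ≤ n → θ' * Real.exp (∑ j ∈ Finset.Icc 1 n, lam j) ≤ n * Qfun lam n)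
    (hn : 1 ≤ n) (a : Fin n → ℝ) :
    ∃ A : ℝ, layerSum lam n n (fun s => (additiveFn a s - A) ^ 2) ≤
      (4 * Θ ^ 2 * Real.exp Θ / θ' ^ 2 + 4) * layerSum lam n n (additiveFn (a ^ 2)) := by
  set S : Set (Fin n) := {j | 2 * ((j : ℕ) + 1) ≤ n}
  set b := S.indicator a
  set c := Sᶜ.indicator a
  have hbc : b + c = a := Set.indicator_self_add_compl S a
  have hsq : b ^ 2 + c ^ 2 = a ^ 2 := by
    ext j
    by_cases hj : j ∈ S <;> simp [b, c, hj]
  have hb := layerSum_sq_sub_le hlam hΘ hle hθ' hQ hn (b := b)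
    fun j hj => Set.indicator_of_notMem (by simpa [S] using hj) a
  have hc := layerSum_sq_additiveFn_le_of_large hlam (c := c)
    fun j hj => Set.indicator_of_notMem (by simpa [S] using hj) a
  refine ⟨poissonMean lam b, ?_⟩
  have hTc : 0 ≤ layerSum lam n n (additiveFn (c ^ 2)) :=
    layerSum_additiveFn_nonneg hlam fun j => sq_nonneg (c j)
  calc layerSum lam n n (fun s => (additiveFn a s - poissonMean lam b) ^ 2)
      = layerSum lam n n fun s =>
          ((additiveFn b s - poissonMean lam b) + additiveFn c s) ^ 2 := by
        simp only [← hbc, additiveFn_add, add_sub_right_comm]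
    _ ≤ 2 * layerSum lam n n (fun s => (additiveFn b s - poissonMean lam b) ^ 2) +
          2 * layerSum lam n n fun s => additiveFn c s ^ 2 := layerSum_add_sq_le hlam n _ _
    _ ≤ (4 * Θ ^ 2 * Real.exp Θ / θ' ^ 2 + 4) *
          (layerSum lam n n (additiveFn (b ^ 2)) + layerSum lam n n (additiveFn (c ^ 2))) := by
        linear_combination 2 * hb + 2 * hc + (4 * Θ ^ 2 * Real.exp Θ / θ' ^ 2 + 2) * hTc
    _ = _ := by rw [← layerSum_additiveFn_add, hsq]

lemma variancen_le_expectn_sq_sub (hQ : Qfun lam n ≠ 0) (f : (Fin n → ℕ) → ℝ) (A : ℝ) :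
    variancen lam n f ≤ expectn lam n fun s => (f s - A) ^ 2 := by
  have hexpand : expectn lam n (fun s => (f s - A) ^ 2) =
      expectn lam n (fun s => f s ^ 2) - 2 * A * expectn lam n f + A ^ 2 := by
    have hsum : ∑ s ∈ OmegaSet n, wt lam n s * (f s - A) ^ 2 =
        ∑ s ∈ OmegaSet n, wt lam n s * f s ^ 2 - 2 * A * ∑ s ∈ OmegaSet n, wt lam n s * f s +
          A ^ 2 * Qfun lam n := by
      simp only [Qfun, Finset.mul_sum, ← Finset.sum_sub_distrib, ← Finset.sum_add_distrib]
      exact Finset.sum_congr rfl fun s _ => by ring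
    rw [expectn, expectn, expectn, hsum]
    field_simp
  rw [hexpand, variancen]
  linarith [sq_nonneg (expectn lam n f - A)]

lemma variancen_additiveFn_le (hlam : ∀ j, 1 ≤ j → 0 ≤ lam j) (hΘ : 0 ≤ Θ)
    (hle : ∀ j : ℕ, 1 ≤ j → j * lam j ≤ Θ) (hθ' : 0 < θ')
    (hQ : ∀ n : ℕ, 1 ≤ n → θ' * Real.exp (∑ j ∈ Finset.Icc 1 n, lam j) ≤ n * Qfun lam n)
    (hn : 1 ≤ n) (a : Fin n → ℝ) :
    variancen lam n (additiveFn a) ≤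
      (4 * Θ ^ 2 * Real.exp Θ / θ' ^ 2 + 4) * expectn lam n (additiveFn (a ^ 2)) := by
  have hQn : 0 < Qfun lam n :=
    pos_of_mul_pos_right ((by positivity : 0 < θ' * Real.exp _).trans_le (hQ n hn))
      (Nat.cast_nonneg n)
  obtain ⟨A, hA⟩ := exists_layerSum_sq_additiveFn_sub_le hlam hΘ hle hθ' hQ hn a
  refine (variancen_le_expectn_sq_sub hQn.ne' _ A).trans ?_
  rw [expectn_eq_layerSum_div, expectn_eq_layerSum_div, ← mul_div_assoc]
  exact div_le_div_of_nonneg_right hA hQn.le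

end Splitting

section Tilting

variable {n : ℕ}

/-- The weights `λ_j ρ^j`, which induce the same measures `P_n` as the weights `λ_j`. -/
def tilt (ρ : ℝ) (lam : ℕ → ℝ) (j : ℕ) : ℝ := lam j * ρ ^ j

lemma wt_tilt (ρ : ℝ) (lam : ℕ → ℝ) (s : Fin n → ℕ) :
    wt (tilt ρ lam) n s = ρ ^ totalSize s * wt lam n s := by
  simp only [wt, tilt, totalSize, ← Finset.prod_pow_eq_pow_sum, ← Finset.prod_mul_distrib]
  exact Finset.prod_congr rfl fun j _ => by rw [mul_pow, ← pow_mul]; ring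

lemma layerSum_tilt (ρ : ℝ) (lam : ℕ → ℝ) (m : ℕ) (f : (Fin n → ℕ) → ℝ) :
    layerSum (tilt ρ lam) n m f = ρ ^ m * layerSum lam n m f := by
  rw [layerSum, layerSum, Finset.mul_sum]
  exact Finset.sum_congr rfl fun s hs => by rw [wt_tilt, mem_sizeLayer.mp hs, mul_assoc]

lemma Qfun_tilt (ρ : ℝ) (lam : ℕ → ℝ) (n : ℕ) :
    Qfun (tilt ρ lam) n = ρ ^ n * Qfun lam n := by
  rw [← layerSum_one le_rfl, ← layerSum_one le_rfl, layerSum_tilt]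

lemma expectn_tilt {ρ : ℝ} (hρ : ρ ≠ 0) (lam : ℕ → ℝ) (f : (Fin n → ℕ) → ℝ) :
    expectn (tilt ρ lam) n f = expectn lam n f := by
  rw [expectn_eq_layerSum_div, expectn_eq_layerSum_div, layerSum_tilt, Qfun_tilt,
    mul_div_mul_left _ _ (pow_ne_zero n hρ)]

lemma variancen_tilt {ρ : ℝ} (hρ : ρ ≠ 0) (lam : ℕ → ℝ) (f : (Fin n → ℕ) → ℝ) :
    variancen (tilt ρ lam) n f = variancen lam n f := by
  simp only [variancen, expectn_tilt hρ]

lemma expectn_additiveFn (lam : ℕ → ℝ) (n : ℕ) (c : ℕ → ℝ) :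
    expectn lam n (additiveFn fun j => c (j + 1)) =
      ∑ j ∈ Finset.Icc 1 n, lam j * c j * (Qfun lam (n - j) / Qfun lam n) := by
  rw [expectn_eq_layerSum_div, layerSum_additiveFn, sum_Icc_one_eq_sum_fin, Finset.sum_div]
  exact Finset.sum_congr rfl fun j _ => by ring

end Tilting

theorem variance_completely_additive_weakly_logarithmic_general {ρ Θ θ' : ℝ} (hρ : 0 < ρ)
    (hθ' : 0 < θ') {lam : ℕ → ℝ} (hlam : ∀ j, 1 ≤ j → 0 ≤ lam j)
    (hle : ∀ j, 1 ≤ j → ρ ^ j * j * lam j ≤ Θ)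
    (hQ : ∀ n : ℕ, 1 ≤ n →
      θ' * Real.exp (∑ j ∈ Finset.Icc 1 n, lam j * ρ ^ j) ≤ n * Qfun lam n * ρ ^ n)
    {n : ℕ} (hn : 1 ≤ n) (a : ℕ → ℝ) :
    variancen lam n (fun s => ∑ j : Fin n, a ((j : ℕ) + 1) * (s j : ℝ)) ≤
      (4 * Θ ^ 2 * Real.exp Θ / θ' ^ 2 + 4) *
        ∑ j ∈ Finset.Icc 1 n, lam j * (a j) ^ 2 * (Qfun lam (n - j) / Qfun lam n) := by
  have htilt : ∀ j, 1 ≤ j → 0 ≤ tilt ρ lam j := fun j hj => mul_nonneg (hlam j hj) (by positivity)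
  have hle' : ∀ j : ℕ, 1 ≤ j → j * tilt ρ lam j ≤ Θ := fun j hj =>
    (hle j hj).trans_eq' (by rw [tilt]; ring)
  have hΘ : 0 ≤ Θ := (mul_nonneg (Nat.cast_nonneg 1) (htilt 1 le_rfl)).trans (hle' 1 le_rfl)
  have hQ' : ∀ m : ℕ, 1 ≤ m → θ' * Real.exp (∑ j ∈ Finset.Icc 1 m, tilt ρ lam j) ≤
      m * Qfun (tilt ρ lam) m := fun m hm =>
    (hQ m hm).trans_eq (by rw [Qfun_tilt]; ring)
  have h := variancen_additiveFn_le htilt hΘ hle' hθ' hQ' hn fun j => a (j + 1)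
  rwa [Pi.pow_def, variancen_tilt hρ.ne', expectn_tilt hρ.ne',
    expectn_additiveFn lam n fun j => a j ^ 2] at h

/-- Theorem 2: for a weakly logarithmic class of assemblies (with constants
`ρ, Θ, θ, θ′ > 0`, `n₀ ≥ 1`) there is a constant `C > 0` such that for every `n ≥ 1`
and every completely additive function `h(s̄) = ∑_{j=1}^n a_j·s_j`,
`V_n h ≤ C · ∑_{j≤n} λ_j a_j² · Q(n−j)/Q(n)`. -/
theorem variance_completely_additive_weakly_logarithmic
    (ρ Θ θ θ' : ℝ) (n₀ : ℕ) (hρ : 0 < ρ) (hΘ : 0 < Θ) (hθ : 0 < θ) (hθ' : 0 < θ')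
    (hn₀ : 1 ≤ n₀) :
    ∃ C : ℝ, 0 < C ∧
      ∀ lam : ℕ → ℝ,
        (∀ j, 1 ≤ j → 0 ≤ lam j) →
        (∀ j, 1 ≤ j → ρ ^ j * j * lam j ≤ Θ) →
        (∀ n, n₀ ≤ n → θ * n ≤ ∑ j ∈ Finset.Icc 1 n, ρ ^ j * j * lam j) →
        (∀ n : ℕ, 1 ≤ n →
          θ' * Real.exp (∑ j ∈ Finset.Icc 1 n, lam j * ρ ^ j) ≤ n * Qfun lam n * ρ ^ n) →
        ∀ n : ℕ, 1 ≤ n →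
          ∀ a : ℕ → ℝ,
            variancen lam n (fun s => ∑ j : Fin n, a ((j : ℕ) + 1) * (s j : ℝ)) ≤
              C * ∑ j ∈ Finset.Icc 1 n,
                  lam j * (a j) ^ 2 * (Qfun lam (n - j) / Qfun lam n) :=
  ⟨4 * Θ ^ 2 * Real.exp Θ / θ' ^ 2 + 4, by positivity, fun _ hlam hle _ hQ _ hn a =>
    variance_completely_additive_weakly_logarithmic_general hρ hθ' hlam hle hQ hn a⟩
end
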